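/- arXiv:1304.1441 — 7 statements merged into one kernel-verified Lean document; each statement's English description precedes it below -/
import Mathlib

section
/- For every natural number n, the quasi-polyadic equality algebra A_n (the subalgebra of C generated by {a_i : i < 2^n}) cannot be generated by n elements: for every subset X of A_n with |X| ≤ n, the subalgebra of C generated by X is not equal to A_n. -/
/- Formalization of quasi-polyadic equality set algebras over the weak space
   `V = {s : α → ℚ | s i ≠ 0 for finitely many i}`, where the infinite ordinal α
   is formalized as an infinite type. -/

open scoped Classical

namespace QPEA

variable {α : Type*}

/-- The weak space `V = ^αℚ^(0)`: functions with finite support. -/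
def W (α : Type*) : Set (α → ℚ) := {s | {i | s i ≠ 0}.Finite}

/-- Cylindrification `c_i`. -/
def cyl (i : α) (X : Set (α → ℚ)) : Set (α → ℚ) :=
  {s | s ∈ W α ∧ ∃ t ∈ X, ∀ j, j ≠ i → t j = s j}

/-- Diagonal element `d_ij`. -/
def diag (i j : α) : Set (α → ℚ) := {s | s ∈ W α ∧ s i = s j}

/-- Transposition substitution `s_[i,j]`. -/
noncomputable def sub (i j : α) (X : Set (α → ℚ)) : Set (α → ℚ) :=
  {s | s ∈ W α ∧ (s ∘ Equiv.swap i j) ∈ X}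

/-- Membership in the subalgebra of the full quasi-polyadic equality set algebra `C`
    (with unit `V = W α`) generated by `S`. -/
inductive SgMem (S : Set (Set (α → ℚ))) : Set (α → ℚ) → Prop
  | base {x : Set (α → ℚ)} : x ∈ S → SgMem S x
  | empty : SgMem S ∅
  | top : SgMem S (W α)
  | dgnl (i j : α) : SgMem S (diag i j)
  | union {x y : Set (α → ℚ)} : SgMem S x → SgMem S y → SgMem S (x ∪ y)
  | compl {x : Set (α → ℚ)} : SgMem S x → SgMem S (W α \ x)
  | cylin (i : α) {x : Set (α → ℚ)} : SgMem S x → SgMem S (cyl i x)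
  | subst (i j : α) {x : Set (α → ℚ)} : SgMem S x → SgMem S (sub i j x)

/-- The subalgebra `Sg^C S` of `C` generated by `S`. -/
def Sg (S : Set (Set (α → ℚ))) : Set (Set (α → ℚ)) := {x | SgMem S x}

/-- The element `[t, r] = {s ∈ V | t = Σ_i r_i s_i}`. -/
noncomputable def poly (t : ℚ) (r : α → ℚ) : Set (α → ℚ) :=
  {s | s ∈ W α ∧ t = ∑ᶠ i, r i * s i}

/-- `a_m = [m, 1]` where `1` is the constantly-one sequence. -/
noncomputable def aElem (m : ℕ) : Set (α → ℚ) := poly (m : ℚ) (fun _ => 1)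

/-- `r ∈ ^αℚ^(0) ∪ ^αℚ^(1)`. -/
def weak01 (r : α → ℚ) : Prop := {i | r i ≠ 0}.Finite ∨ {i | r i ≠ 1}.Finite

/-- `Pol = {[t,r] : r ∈ ^αℚ^(0) ∪ ^αℚ^(1)}`. -/
def Pol (α : Type*) : Set (Set (α → ℚ)) :=
  {X | ∃ t r, weak01 r ∧ X = poly t r}

/-- `Po = {[t,r] ∈ Pol : 0 ∈ range r} ∪ {d_ij : i ≠ j}`. -/
def Po (α : Type*) : Set (Set (α → ℚ)) :=
  {X | ∃ t r, weak01 r ∧ (∃ i, r i = 0) ∧ X = poly t r} ∪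
    {X | ∃ i j : α, i ≠ j ∧ X = diag i j}

/-- `Pof = {[t, 1] : t ∈ ℚ}`. -/
def Pof (α : Type*) : Set (Set (α → ℚ)) := {X | ∃ t : ℚ, X = poly t (fun _ => 1)}

/-- `X^S = {s_[i,j] x : x ∈ X, i, j < α}`. -/
def sClose (X : Set (Set (α → ℚ))) : Set (Set (α → ℚ)) :=
  {y | ∃ x ∈ X, ∃ i j : α, y = sub i j x}

/-- `X*`: finite intersections of elements of `X` and complements (rel. `V`) of
    elements of `X` (the empty intersection being `V`). -/
def star (X : Set (Set (α → ℚ))) : Set (Set (α → ℚ)) :=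
  {p | ∃ (n : ℕ) (f : Fin n → Set (α → ℚ)),
      (∀ i, f i ∈ X ∨ ∃ q ∈ X, f i = W α \ q) ∧ p = W α ∩ ⋂ i, f i}

/-- `X**`: finite unions of elements of `X*` (the empty union being `∅`);
    the Boolean subalgebra of `℘(V)` generated by `X`. -/
def dstar (X : Set (Set (α → ℚ))) : Set (Set (α → ℚ)) :=
  {p | ∃ (n : ℕ) (f : Fin n → Set (α → ℚ)), (∀ i, f i ∈ star X) ∧ p = ⋃ i, f i}

/-- `G(Y) = (Y^S ∪ Po)**`. -/
def G (Y : Set (Set (α → ℚ))) : Set (Set (α → ℚ)) := dstar (sClose Y ∪ Po α)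

/-- `Poz`: elements of `G(Pol)` covered by finitely many elements of `Po`. -/
def Poz (α : Type*) : Set (Set (α → ℚ)) :=
  {x | x ∈ G (Pol α) ∧
    ∃ (n : ℕ) (p : Fin n → Set (α → ℚ)), (∀ i, p i ∈ Po α) ∧ x ⊆ ⋃ i, p i}

/-- `Neg = G(∅) ∖ Poz`. -/
def Neg (α : Type*) : Set (Set (α → ℚ)) := G (∅ : Set (Set (α → ℚ))) \ Poz α

/-- An ideal of a subalgebra `B` of `C`: a nonempty subset of `B`, downward closed
    in `B`, closed under `∪`, and closed under the operations `c_i` and `s_[i,j]`. -/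
def IsIdeal (B I : Set (Set (α → ℚ))) : Prop :=
  I.Nonempty ∧ I ⊆ B ∧
    (∀ x ∈ I, ∀ y ∈ B, y ⊆ x → y ∈ I) ∧
    (∀ x ∈ I, ∀ y ∈ I, x ∪ y ∈ I) ∧
    (∀ x ∈ I, ∀ i : α, cyl i x ∈ I) ∧
    (∀ x ∈ I, ∀ i j : α, sub i j x ∈ I)

/-- `B` is simple: every ideal of `B` equals `{∅}` or all of `B`. -/
def Simple (B : Set (Set (α → ℚ))) : Prop :=
  ∀ I : Set (Set (α → ℚ)), IsIdeal B I → I = {∅} ∨ I = B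

/-- A subuniverse of `C`: contains `∅`, `V`, all diagonals, and is closed under
    `∪`, complement relative to `V`, all `c_i` and all `s_[i,j]`. -/
def IsSubuniv (B : Set (Set (α → ℚ))) : Prop :=
  (∅ : Set (α → ℚ)) ∈ B ∧ W α ∈ B ∧ (∀ i j : α, diag i j ∈ B) ∧
    (∀ x ∈ B, ∀ y ∈ B, x ∪ y ∈ B) ∧
    (∀ x ∈ B, W α \ x ∈ B) ∧
    (∀ i : α, ∀ x ∈ B, cyl i x ∈ B) ∧
    (∀ i j : α, ∀ x ∈ B, sub i j x ∈ B)

end QPEA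

open QPEA

/-! The coordinate sum is the only symmetric linear functional on the weak space, up to scaling.
Cylindrifying amounts to eliminating one variable from a finite system of affine equations; the
eliminant has a zero coefficient, so it is either constant or asymmetric (its coefficients are not
all equal). Hence a colouring of `ℚ`, constant off a finite set, that determines membership in
each element of `S` from the coordinate sum off finitely many asymmetric hyperplanes does the same
for each element of `Sg S`.

If `Sg X` is generated by the hyperplanes with coordinate sum in `T`, colour `q` by the set of those
`x ∈ X` that contain the generic points with coordinate sum `q`. This colouring determines
membership in the elements of `X` in the above sense, hence in every `[t, 1]` with `t ∈ T`, so it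
separates each `t ∈ T` from all other rationals. It therefore has at least `|T| + 1` values,
but there are only `2 ^ |X|` subsets of `X`. -/

namespace QPEA

open Finset

variable {α β : Type*}

lemma coe_mem_W (s : α →₀ ℚ) : ⇑s ∈ W α := s.hasFiniteSupport

lemma coe_mem_poly (t : ℚ) (r : α → ℚ) (s : α →₀ ℚ) :
    ⇑s ∈ poly t r ↔ Finsupp.linearCombination ℚ r s = t := by
  have hsum : ∑ᶠ i, r i * s i = Finsupp.linearCombination ℚ r s := by
    rw [finsum_eq_sum_of_support_subset (s := s.support) _ fun i hi => by
      simpa using right_ne_zero_of_mul hi]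
    simp [Finsupp.linearCombination_apply, Finsupp.sum, mul_comm]
  simp only [poly, Set.mem_ofPred_eq, coe_mem_W, true_and, hsum, eq_comm]

lemma coe_mem_cyl (i : α) (x : Set (α → ℚ)) (s : α →₀ ℚ) :
    ⇑s ∈ cyl i x ↔ ∃ q, ⇑(s + Finsupp.single i q : α →₀ ℚ) ∈ x := by
  constructor
  · rintro ⟨-, t, htx, hts⟩
    refine ⟨t i - s i, ?_⟩
    convert htx using 1
    ext j
    by_cases hj : j = i
    · simp [hj]
    · simp [hj, hts j hj]
  · rintro ⟨q, hq⟩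
    exact ⟨coe_mem_W s, _, hq, fun j hj => by simp [hj]⟩

lemma exists_forall_add_mul_ne_zero {ι K : Type*} [Field K] [Infinite K] (I : Finset ι)
    (a b : ι → K) (h : ∀ i ∈ I, a i ≠ 0 ∨ b i ≠ 0) : ∃ q, ∀ i ∈ I, a i + q * b i ≠ 0 := by
  obtain ⟨q, hq⟩ := Infinite.exists_notMem_finset (I.image fun i => -a i / b i)
  refine ⟨q, fun i hi hzero => ?_⟩
  by_cases hb : b i = 0
  · exact (h i hi).elim (fun ha => ha (by simpa [hb] using hzero)) fun hb' => hb' hb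
  · exact hq (mem_image.2 ⟨i, hi, by rw [div_eq_iff hb]; linear_combination -hzero⟩)

lemma apply_eq_of_forall_mem_eq_iff {ι : Type*} {T : Finset ι} {κ : ι → β}
    (hκ : ∀ q ∉ T, ∀ q' ∉ T, κ q = κ q') {q q' : ι}
    (h : ∀ t ∈ T, q = t ↔ q' = t) : κ q = κ q' := by
  by_cases hq : q ∈ T
  · rw [(h q hq).1 rfl]
  · by_cases hq' : q' ∈ T
    · rw [(h q' hq').2 rfl]
    · exact hκ q hq q' hq'

lemma card_lt_card_of_separated {ι : Type*} [Infinite ι] {T : Finset ι} {B : Finset β}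
    (κ : ι → β) (hB : ∀ q, κ q ∈ B) (hT : ∀ t ∈ T, ∀ q, κ q = κ t → q = t) : #T < #B := by
  obtain ⟨q, hq⟩ := Infinite.exists_notMem_finset T
  have hinj : Set.InjOn κ T := fun a _ b hb hab => hT b hb a hab
  rw [← card_image_of_injOn hinj]
  refine card_lt_card ((ssubset_iff_of_subset (image_subset_iff.2 fun t _ => hB t)).2
    ⟨κ q, hB q, fun hmem => ?_⟩)
  obtain ⟨t, ht, htq⟩ := mem_image.1 hmem
  exact hq (hT t ht q htq.symm ▸ ht)

section AffineFunctional

/-- Affine functionals on the weak space `V`, whose points are encoded as finitely supported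
functions. Their zero sets are the affine hyperplanes of `V`, together with `∅` and `V`. -/
abbrev AffineFunctional (α : Type*) := (α →₀ ℚ) →ᵃ[ℚ] ℚ

/-- The coefficient of the `i`-th coordinate in an affine functional. -/
noncomputable def coeff (f : AffineFunctional α) (i : α) : ℚ := f.linear (Finsupp.single i 1)

/-- An affine functional whose linear part is not a multiple of the coordinate sum; its zero set
meets every hyperplane of constant coordinate sum in a proper subset. -/
def IsAsymmetric (f : AffineFunctional α) : Prop := ∃ i j, coeff f i ≠ coeff f j

/-- The coordinate sum of a point of the weak space. -/
noncomputable def total : (α →₀ ℚ) →ₗ[ℚ] ℚ := Finsupp.linearCombination ℚ fun _ => 1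

/-- The affine functional `s ↦ total s - t`, whose zero set is `[t, 1]`. -/
noncomputable def totalSub (t : ℚ) : AffineFunctional α :=
  total.toAffineMap - AffineMap.const ℚ (α →₀ ℚ) t

/-- The combination of `f` and `g` in which the `i`-th coordinate cancels. -/
noncomputable def eliminate (i : α) (f g : AffineFunctional α) : AffineFunctional α :=
  coeff f i • g - coeff g i • f

lemma total_single (i : α) (q : ℚ) : total (Finsupp.single i q) = q := by simp [total]

lemma total_domLCongr (e : α ≃ α) (s : α →₀ ℚ) :
    total (Finsupp.domLCongr (R := ℚ) e s) = total s := by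
  simp [total, Finsupp.domLCongr_apply, Finsupp.linearCombination_equivMapDomain,
    Function.comp_def]

lemma coe_mem_poly_one (t : ℚ) (s : α →₀ ℚ) : ⇑s ∈ poly t (fun _ => 1) ↔ total s = t :=
  coe_mem_poly t _ s

lemma totalSub_apply (t : ℚ) (s : α →₀ ℚ) : totalSub t s = total s - t := by simp [totalSub]

lemma totalSub_eq_zero_iff (t : ℚ) (s : α →₀ ℚ) : totalSub t s = 0 ↔ total s = t := by
  rw [totalSub_apply, sub_eq_zero]

lemma coeff_totalSub (t : ℚ) (i : α) : coeff (totalSub t) i = 1 := by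
  simp [coeff, totalSub, total_single]

lemma coeff_add (f g : AffineFunctional α) (i : α) : coeff (f + g) i = coeff f i + coeff g i := by
  simp [coeff]

lemma coeff_comp_domLCongr (f : AffineFunctional α) (e : α ≃ α) (i : α) :
    coeff (f.comp (Finsupp.domLCongr (R := ℚ) e).toLinearMap.toAffineMap) i = coeff f (e i) := by
  simp [coeff]

lemma IsAsymmetric.add_totalSub {f : AffineFunctional α} (hf : IsAsymmetric f) (t : ℚ) :
    IsAsymmetric (f + totalSub t) := by
  obtain ⟨i, j, hij⟩ := hf
  exact ⟨i, j, by simpa [coeff_add, coeff_totalSub] using hij⟩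

lemma IsAsymmetric.comp_domLCongr {f : AffineFunctional α} (hf : IsAsymmetric f) (e : α ≃ α) :
    IsAsymmetric (f.comp (Finsupp.domLCongr (R := ℚ) e).toLinearMap.toAffineMap) := by
  obtain ⟨i, j, hij⟩ := hf
  exact ⟨e.symm i, e.symm j, by simpa only [coeff_comp_domLCongr, e.apply_symm_apply] using hij⟩

lemma isAsymmetric_lapply_sub_lapply {i j : α} (hij : i ≠ j) :
    IsAsymmetric (Finsupp.lapply (R := ℚ) i - Finsupp.lapply j : _ →ₗ[ℚ] ℚ).toAffineMap :=
  ⟨i, j, by norm_num [coeff, hij, hij.symm]⟩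

lemma eliminate_apply (i : α) (f g : AffineFunctional α) (s : α →₀ ℚ) :
    eliminate i f g s = coeff f i * g s - coeff g i * f s := by
  simp [eliminate]

lemma coeff_eliminate_self (i : α) (f g : AffineFunctional α) : coeff (eliminate i f g) i = 0 := by
  simp [coeff, eliminate, mul_comm]

lemma apply_add_single (f : AffineFunctional α) (s : α →₀ ℚ) (i : α) (q : ℚ) :
    f (s + Finsupp.single i q) = f s + q * coeff f i := by
  rw [add_comm s, ← vadd_eq_add, f.map_vadd, ← Finsupp.smul_single_one, map_smul, vadd_eq_add,
    smul_eq_mul, add_comm, coeff]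

lemma apply_add_single_of_coeff_eq_zero {f : AffineFunctional α} {i : α} (hf : coeff f i = 0)
    (s : α →₀ ℚ) (q : ℚ) : f (s + Finsupp.single i q) = f s := by
  simp [apply_add_single, hf]

lemma apply_eq_apply_of_coeff_eq_zero {f : AffineFunctional α} (hf : ∀ i, coeff f i = 0)
    (s s' : α →₀ ℚ) : f s = f s' := by
  have hlinear : f.linear = 0 := by
    ext i
    simpa [coeff] using hf i
  obtain ⟨c, rfl⟩ := f.linear_eq_zero_iff_exists_const.1 hlinear
  rfl

lemma isAsymmetric_or_apply_eq_apply {f : AffineFunctional α} {i : α} (hf : coeff f i = 0) :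
    IsAsymmetric f ∨ ∀ s s', f s = f s' := by
  by_cases h : IsAsymmetric f
  · exact .inl h
  · simp only [IsAsymmetric, not_exists, not_not] at h
    exact .inr (apply_eq_apply_of_coeff_eq_zero fun j => (h j i).trans hf)

lemma exists_total_eq_and_forall_ne_zero [Nonempty α] (q : ℚ) (F : Finset (AffineFunctional α))
    (hF : ∀ f ∈ F, IsAsymmetric f) : ∃ s, total s = q ∧ ∀ f ∈ F, f s ≠ 0 := by
  induction F using Finset.induction_on with
  | empty => exact ⟨Finsupp.single (Classical.arbitrary α) q, total_single _ _, by simp⟩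
  | insert f F _ ih =>
    obtain ⟨s, hs, hsF⟩ := ih fun g hg => hF g (mem_insert_of_mem hg)
    obtain ⟨i, j, hij⟩ := hF f (mem_insert_self f F)
    -- Moving along `e_i - e_j` keeps the coordinate sum but changes the value of `f`.
    obtain ⟨c, hc⟩ := exists_forall_add_mul_ne_zero (insert f F) (fun g => g s)
      (fun g => coeff g i - coeff g j) <| forall_mem_insert .. |>.2
        ⟨.inr (sub_ne_zero.2 hij), fun g hg => .inl (hsF g hg)⟩
    refine ⟨s + Finsupp.single i c + Finsupp.single j (-c), ?_, fun g hg hzero => hc g hg ?_⟩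
    · simp [total_single, hs]
    · rw [apply_add_single, apply_add_single] at hzero
      linear_combination hzero

end AffineFunctional

section SameZeros

/-- The points `s` and `s'` lie on the same hyperplanes `{f = 0}`, `f ∈ F`. -/
def SameZeros (F : Finset (AffineFunctional α)) (s s' : α →₀ ℚ) : Prop :=
  ∀ f ∈ F, (f s = 0 ↔ f s' = 0)

/-- The functionals not involving the `i`-th coordinate that are obtained from `F` by eliminating
this coordinate, as in one step of Gaussian elimination. -/
noncomputable def elimination (i : α) (F : Finset (AffineFunctional α)) :
    Finset (AffineFunctional α) :=
  {f ∈ F | coeff f i = 0} ∪ image₂ (eliminate i) F F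

variable {F G : Finset (AffineFunctional α)} {s s' : α →₀ ℚ} {i : α}

lemma SameZeros.symm (h : SameZeros F s s') : SameZeros F s' s := fun f hf => (h f hf).symm

lemma SameZeros.mono (hFG : F ⊆ G) (h : SameZeros G s s') : SameZeros F s s' :=
  fun f hf => h f (hFG hf)

lemma sameZeros_of_forall_ne_zero (hs : ∀ f ∈ F, f s ≠ 0) (hs' : ∀ f ∈ F, f s' ≠ 0) :
    SameZeros F s s' :=
  fun f hf => iff_of_false (hs f hf) (hs' f hf)

lemma coeff_eq_zero_of_mem_elimination {f : AffineFunctional α} (hf : f ∈ elimination i F) :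
    coeff f i = 0 := by
  rcases mem_union.1 hf with hf | hf
  · exact (mem_filter.1 hf).2
  · obtain ⟨g, -, h, -, rfl⟩ := mem_image₂.1 hf
    exact coeff_eliminate_self i g h

lemma SameZeros.of_filter_isAsymmetric (hF : ∀ f ∈ F, coeff f i = 0)
    (h : SameZeros {f ∈ F | IsAsymmetric f} s s') : SameZeros F s s' := by
  intro f hf
  rcases isAsymmetric_or_apply_eq_apply (hF f hf) with hasym | hconst
  · exact h f (mem_filter.2 ⟨hf, hasym⟩)
  · rw [hconst s s']

lemma SameZeros.exists_add_single (h : SameZeros (elimination i F) s s') (q : ℚ) :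
    ∃ q', SameZeros F (s + Finsupp.single i q) (s' + Finsupp.single i q') := by
  by_cases hzero : ∃ f ∈ F, coeff f i ≠ 0 ∧ f (s + Finsupp.single i q) = 0
  · obtain ⟨f, hf, hfi, hfs⟩ := hzero
    refine ⟨-f s' / coeff f i, fun g hg => ?_⟩
    have hfs' : f (s' + Finsupp.single i (-f s' / coeff f i)) = 0 := by
      rw [apply_add_single, div_mul_cancel₀ _ hfi, add_neg_cancel]
    have helim := h _ (mem_union_right _ (mem_image₂_of_mem hf hg))
    rw [← apply_add_single_of_coeff_eq_zero (coeff_eliminate_self i f g) s q,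
      ← apply_add_single_of_coeff_eq_zero (coeff_eliminate_self i f g) s' (-f s' / coeff f i),
      eliminate_apply, eliminate_apply, hfs, hfs'] at helim
    simpa [hfi] using helim
  · push Not at hzero
    obtain ⟨q', hq'⟩ := exists_forall_add_mul_ne_zero {f ∈ F | coeff f i ≠ 0} (fun f => f s')
      (fun f => coeff f i) fun f hf => .inr (mem_filter.1 hf).2
    refine ⟨q', fun f hf => ?_⟩
    by_cases hfi : coeff f i = 0
    · simpa only [apply_add_single_of_coeff_eq_zero hfi] using
        h f (mem_union_left _ (mem_filter.2 ⟨hf, hfi⟩))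
    · refine iff_of_false (hzero f hf hfi) ?_
      rw [apply_add_single]
      exact hq' f (mem_filter.2 ⟨hf, hfi⟩)

end SameZeros

section DeterminedBy

/-- Membership in `x` of a point `s` depends only on which functionals of `F` vanish at `s` and on
the colour `κ (total s)` of its coordinate sum. A constant colouring, such as `fun _ => ()`, leaves
only the former. -/
def DeterminedBy (F : Finset (AffineFunctional α)) (κ : ℚ → β) (x : Set (α → ℚ)) : Prop :=
  ∀ ⦃s s' : α →₀ ℚ⦄, SameZeros F s s' → κ (total s) = κ (total s') → (⇑s ∈ x ↔ ⇑s' ∈ x)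

/-- Off finitely many asymmetric hyperplanes, membership in `x` of a point `s` depends only on
`κ (total s)`; on these hyperplanes it may in addition depend on which of them contain `s`. -/
def GenericallyDeterminedBy (κ : ℚ → β) (x : Set (α → ℚ)) : Prop :=
  ∃ F : Finset (AffineFunctional α), (∀ f ∈ F, IsAsymmetric f) ∧ DeterminedBy F κ x

variable {γ : Type*} {F : Finset (AffineFunctional α)} {κ : ℚ → β} {κ' : ℚ → γ} {T : Finset ℚ}
  {x y : Set (α → ℚ)}

lemma DeterminedBy.mono (hx : DeterminedBy F κ x)
    (hκ : ∀ q q', κ' q = κ' q' → κ q = κ q') : DeterminedBy F κ' x :=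
  fun _ _ hzeros hcol => hx hzeros (hκ _ _ hcol)

lemma DeterminedBy.union_image_totalSub (hx : DeterminedBy F κ x)
    (hκ : ∀ q ∉ T, ∀ q' ∉ T, κ q = κ q') :
    DeterminedBy (F ∪ T.image totalSub) (fun _ => ()) x := by
  refine fun s s' hzeros _ => hx (hzeros.mono subset_union_left) ?_
  refine apply_eq_of_forall_mem_eq_iff hκ fun t ht => ?_
  simpa only [totalSub_eq_zero_iff] using
    hzeros _ (mem_union_right _ (mem_image_of_mem totalSub ht))

lemma DeterminedBy.cyl (i : α) (hx : DeterminedBy F (fun _ => ()) x) :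
    DeterminedBy {f ∈ elimination i F | IsAsymmetric f} (fun _ => ()) (cyl i x) := by
  have cyl_imp : ∀ {s s' : α →₀ ℚ}, SameZeros {f ∈ elimination i F | IsAsymmetric f} s s' →
      ⇑s ∈ QPEA.cyl i x → ⇑s' ∈ QPEA.cyl i x := by
    intro s s' hzeros hs
    obtain ⟨q, hq⟩ := (coe_mem_cyl i x s).1 hs
    obtain ⟨q', hq'⟩ := (SameZeros.of_filter_isAsymmetric
      (fun _ => coeff_eq_zero_of_mem_elimination) hzeros).exists_add_single q
    exact (coe_mem_cyl i x s').2 ⟨q', (hx hq' rfl).1 hq⟩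
  exact fun s s' hzeros _ => ⟨cyl_imp hzeros, cyl_imp hzeros.symm⟩

namespace GenericallyDeterminedBy

lemma mono (hx : GenericallyDeterminedBy κ x) (hκ : ∀ q q', κ' q = κ' q' → κ q = κ q') :
    GenericallyDeterminedBy κ' x :=
  let ⟨F, hF, hFx⟩ := hx
  ⟨F, hF, hFx.mono hκ⟩

lemma empty : GenericallyDeterminedBy κ (∅ : Set (α → ℚ)) :=
  ⟨∅, by simp, fun _ _ _ _ => Iff.rfl⟩

lemma compl (hx : GenericallyDeterminedBy κ x) : GenericallyDeterminedBy κ (W α \ x) := by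
  obtain ⟨F, hF, hFx⟩ := hx
  refine ⟨F, hF, fun s s' hzeros hcol => ?_⟩
  simp only [Set.mem_sdiff, coe_mem_W, true_and, hFx hzeros hcol]

lemma union (hx : GenericallyDeterminedBy κ x) (hy : GenericallyDeterminedBy κ y) :
    GenericallyDeterminedBy κ (x ∪ y) := by
  obtain ⟨F, hF, hFx⟩ := hx
  obtain ⟨G, hG, hGy⟩ := hy
  refine ⟨F ∪ G, fun f hf => (mem_union.1 hf).elim (hF f) (hG f), fun s s' hzeros hcol => ?_⟩
  exact or_congr (hFx (hzeros.mono subset_union_left) hcol)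
    (hGy (hzeros.mono subset_union_right) hcol)

lemma diag (i j : α) : GenericallyDeterminedBy κ (diag i j) := by
  by_cases hij : i = j
  · exact ⟨∅, by simp, fun s s' _ _ => by simp [QPEA.diag, coe_mem_W, hij]⟩
  · refine ⟨{_}, by simpa using isAsymmetric_lapply_sub_lapply hij, fun s s' hzeros _ => ?_⟩
    simpa [QPEA.diag, coe_mem_W, sub_eq_zero] using hzeros _ (mem_singleton_self _)

lemma sub (i j : α) (hx : GenericallyDeterminedBy κ x) :
    GenericallyDeterminedBy κ (sub i j x) := by
  obtain ⟨F, hF, hFx⟩ := hx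
  let P := Finsupp.domLCongr (M := ℚ) (R := ℚ) (Equiv.swap i j)
  have mem_sub : ∀ s : α →₀ ℚ, ⇑s ∈ QPEA.sub i j x ↔ ⇑(P s) ∈ x := by
    intro s
    have hP : ⇑(P s) = s ∘ Equiv.swap i j := by ext k; simp [P]
    simp only [QPEA.sub, Set.mem_ofPred_eq, coe_mem_W, true_and, hP]
  refine ⟨F.image fun f => f.comp P.toLinearMap.toAffineMap,
    forall_mem_image.2 fun f hf => (hF f hf).comp_domLCongr _, fun s s' hzeros hcol => ?_⟩
  rw [mem_sub, mem_sub]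
  refine hFx (fun f hf => hzeros _ (mem_image_of_mem _ hf)) ?_
  rwa [total_domLCongr, total_domLCongr]

lemma cyl (i : α) (hκ : ∀ q ∉ T, ∀ q' ∉ T, κ q = κ q') (hx : GenericallyDeterminedBy κ x) :
    GenericallyDeterminedBy κ (cyl i x) :=
  let ⟨_, _, hFx⟩ := hx
  ⟨_, fun _ hf => (mem_filter.1 hf).2,
    ((hFx.union_image_totalSub hκ).cyl i).mono fun _ _ _ => rfl⟩

lemma of_mem_Sg {S : Set (Set (α → ℚ))} (hκ : ∀ q ∉ T, ∀ q' ∉ T, κ q = κ q')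
    (hS : ∀ y ∈ S, GenericallyDeterminedBy κ y) (hx : x ∈ Sg S) :
    GenericallyDeterminedBy κ x := by
  induction hx with
  | base h => exact hS _ h
  | empty => exact empty
  | top => simpa using empty.compl
  | dgnl i j => exact diag i j
  | union _ _ hy hz => exact hy.union hz
  | compl _ hy => exact hy.compl
  | cylin i _ hy => exact hy.cyl i hκ
  | subst i j _ hy => exact hy.sub i j

end GenericallyDeterminedBy

lemma genericallyDeterminedBy_poly_one {t : ℚ} (h : ∀ q, κ q = κ t → q = t) :
    GenericallyDeterminedBy κ (poly t fun _ : α => 1) := by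
  refine ⟨∅, by simp, fun s s' _ hcol => ?_⟩
  rw [coe_mem_poly_one, coe_mem_poly_one]
  exact ⟨fun hs => h _ (hcol ▸ congrArg κ hs), fun hs' => h _ (hcol ▸ congrArg κ hs')⟩

lemma GenericallyDeterminedBy.eq_of_poly_one [Nonempty α] {t q : ℚ}
    (h : GenericallyDeterminedBy κ (poly t fun _ : α => 1)) (hq : κ q = κ t) : q = t := by
  obtain ⟨F, hF, hFt⟩ := h
  obtain ⟨s, rfl, hs⟩ := exists_total_eq_and_forall_ne_zero q F hF
  obtain ⟨s', rfl, hs'⟩ := exists_total_eq_and_forall_ne_zero t F hF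
  rw [← coe_mem_poly_one, hFt (sameZeros_of_forall_ne_zero hs hs') hq, coe_mem_poly_one]

lemma GenericallyDeterminedBy.of_mem_Sg_poly_one
    (hx : x ∈ Sg ((fun t => poly t fun _ => 1) '' (T : Set ℚ))) :
    GenericallyDeterminedBy (fun q => T ∩ {q}) x := by
  refine of_mem_Sg (T := T) (fun q hq q' hq' => by simp [hq, hq']) ?_ hx
  refine Set.forall_mem_image.2 fun t ht => genericallyDeterminedBy_poly_one fun q hq => ?_
  have htq : t ∈ T ∩ {q} := hq ▸ mem_inter.2 ⟨ht, mem_singleton_self t⟩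
  exact (mem_singleton.1 (mem_inter.1 htq).2).symm

end DeterminedBy

section GenericTotals

/-- The values `q` such that `x` contains every point with coordinate sum `q` outside finitely many
asymmetric hyperplanes. -/
def genericTotals (x : Set (α → ℚ)) : Set ℚ :=
  {q | ∃ F : Finset (AffineFunctional α), (∀ f ∈ F, IsAsymmetric f) ∧
    ∀ s, total s = q → (∀ f ∈ F, f s ≠ 0) → ⇑s ∈ x}

variable [Nonempty α] {F : Finset (AffineFunctional α)} {κ : ℚ → β} {T : Finset ℚ}
  {x : Set (α → ℚ)}

lemma DeterminedBy.total_mem_genericTotals_iff (hx : DeterminedBy F κ x)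
    (hF : ∀ f ∈ F, IsAsymmetric f) {s : α →₀ ℚ} (hs : ∀ f ∈ F, f s ≠ 0) :
    total s ∈ genericTotals x ↔ ⇑s ∈ x := by
  constructor
  · rintro ⟨G, hG, hGx⟩
    obtain ⟨u, hus, hu⟩ := exists_total_eq_and_forall_ne_zero (total s) (F ∪ G)
      fun f hf => (mem_union.1 hf).elim (hF f) (hG f)
    have hux : ⇑u ∈ x := hGx u hus fun f hf => hu f (mem_union_right _ hf)
    have hzeros : SameZeros F u s :=
      sameZeros_of_forall_ne_zero (fun f hf => hu f (mem_union_left _ hf)) hs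
    exact (hx hzeros (congrArg κ hus)).1 hux
  · exact fun hsx => ⟨F, hF, fun u hus hu =>
      (hx (sameZeros_of_forall_ne_zero hu hs) (congrArg κ hus)).2 hsx⟩

lemma GenericallyDeterminedBy.mem_genericTotals_congr (hx : GenericallyDeterminedBy κ x)
    {q q' : ℚ} (hq : κ q = κ q') : q ∈ genericTotals x ↔ q' ∈ genericTotals x := by
  obtain ⟨F, hF, hFx⟩ := hx
  obtain ⟨s, rfl, hs⟩ := exists_total_eq_and_forall_ne_zero q F hF
  obtain ⟨s', rfl, hs'⟩ := exists_total_eq_and_forall_ne_zero q' F hF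
  rw [hFx.total_mem_genericTotals_iff hF hs, hFx.total_mem_genericTotals_iff hF hs']
  exact hFx (sameZeros_of_forall_ne_zero hs hs') hq

lemma genericallyDeterminedBy_mem_genericTotals (hκ : ∀ q ∉ T, ∀ q' ∉ T, κ q = κ q')
    (hx : GenericallyDeterminedBy κ x) : GenericallyDeterminedBy (· ∈ genericTotals x) x := by
  obtain ⟨F, hF, hFx⟩ := hx
  refine ⟨F ∪ image₂ (fun f t => f + totalSub t) F T, fun f hf => ?_, fun s s' hzeros hcol => ?_⟩
  · rcases mem_union.1 hf with hf | hf
    · exact hF f hf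
    · obtain ⟨g, hg, t, -, rfl⟩ := mem_image₂.1 hf
      exact (hF g hg).add_totalSub t
  have hzerosF : SameZeros F s s' := hzeros.mono subset_union_left
  by_cases hs : ∃ f ∈ F, f s = 0
  · -- Where `f` vanishes, the asymmetric functional `f + totalSub t` detects `total s = t`.
    obtain ⟨f, hf, hfs⟩ := hs
    refine hFx hzerosF (apply_eq_of_forall_mem_eq_iff hκ fun t ht => ?_)
    simpa [hfs, (hzerosF f hf).1 hfs, totalSub_eq_zero_iff] using
      hzeros _ (mem_union_right _ (mem_image₂_of_mem hf ht))
  · push Not at hs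
    have hs' : ∀ f ∈ F, f s' ≠ 0 := fun f hf => mt (hzerosF f hf).2 (hs f hf)
    rw [← hFx.total_mem_genericTotals_iff hF hs, ← hFx.total_mem_genericTotals_iff hF hs']
    exact iff_of_eq hcol

end GenericTotals

lemma setOf_aElem_eq_image_poly (N : ℕ) :
    {x : Set (α → ℚ) | ∃ i : ℕ, i < N ∧ x = aElem i} =
      (fun t => poly t fun _ => 1) '' ((range N).map Nat.castEmbedding : Finset ℚ) := by
  ext x
  simp [aElem, eq_comm]

end QPEA

open Finset in
theorem stmt0_general {α : Type*} [Nonempty α] (T : Finset ℚ) (X : Finset (Set (α → ℚ)))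
    (hcard : 2 ^ #X ≤ #T) :
    Sg (X : Set (Set (α → ℚ))) ≠ Sg ((fun t => poly t fun _ => 1) '' (T : Set ℚ)) := by
  intro heq
  have hX : ∀ x ∈ X, GenericallyDeterminedBy (fun q => T ∩ {q}) x := fun x hx =>
    .of_mem_Sg_poly_one (heq ▸ SgMem.base hx : x ∈ Sg _)
  have hoff : ∀ q ∉ T, ∀ q' ∉ T, T ∩ {q} = T ∩ {q'} := fun q hq q' hq' => by simp [hq, hq']
  let κ : ℚ → Finset (Set (α → ℚ)) := fun q => {x ∈ X | q ∈ genericTotals x}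
  have hκoff : ∀ q ∉ T, ∀ q' ∉ T, κ q = κ q' := fun q hq q' hq' =>
    filter_congr fun x hx => (hX x hx).mem_genericTotals_congr (hoff q hq q' hq')
  have hκX : ∀ x ∈ X, GenericallyDeterminedBy κ x := fun x hx =>
    (genericallyDeterminedBy_mem_genericTotals hoff (hX x hx)).mono
      fun q q' hqq' => propext (filter_inj'.1 hqq' hx)
  have hκT : ∀ t ∈ T, ∀ q, κ q = κ t → q = t := by
    intro t ht q hqt
    have hmem : poly t (fun _ => 1) ∈ Sg (X : Set (Set (α → ℚ))) :=
      heq ▸ SgMem.base (Set.mem_image_of_mem _ ht)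
    exact (GenericallyDeterminedBy.of_mem_Sg hκoff hκX hmem).eq_of_poly_one hqt
  have hlt : #T < #X.powerset :=
    card_lt_card_of_separated κ (fun q => mem_powerset.2 (filter_subset _ X)) hκT
  exact hlt.not_ge (by rwa [card_powerset])

/-- For every natural number `n`, the algebra `A_n` (the subalgebra of `C`
generated by `{a_i : i < 2^n}`) cannot be generated by `n` elements: for every
subset `X` of `A_n` with `|X| ≤ n`, the subalgebra of `C` generated by `X` is not `A_n`. -/
theorem stmt0 {α : Type*} [Infinite α] (n : ℕ)
    (X : Set (Set (α → ℚ)))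
    (hX : X ⊆ Sg {x : Set (α → ℚ) | ∃ i : ℕ, i < 2 ^ n ∧ x = aElem i})
    (hfin : X.Finite) (hcard : X.ncard ≤ n) :
    Sg X ≠ Sg {x : Set (α → ℚ) | ∃ i : ℕ, i < 2 ^ n ∧ x = aElem i} := by
  rw [setOf_aElem_eq_image_poly, ← hfin.coe_toFinset]
  exact stmt0_general _ _ (by
    simpa [← Set.ncard_eq_toFinset_card X hfin] using Nat.pow_le_pow_right two_pos hcard)
end

section
/- For every natural number n, the quasi-polyadic equality algebra A_n (the subalgebra of C generated by {a_i : i < 2^n}) can be generated by n+1 elements: there exists a subset X of A_n with |X| = n+1 such that the subalgebra of C generated by X equals A_n. -/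
/- Formalization of quasi-polyadic equality set algebras over the weak space
   `V = {s : α → ℚ | s i ≠ 0 for finitely many i}`, where the infinite ordinal α
   is formalized as an infinite type. -/

open scoped Classical

open QPEA

/- A disjoint family `(a i)` with `2 ^ n` indices can be recovered from the unions
`⋃ i ∈ t, a i` for `t` in any family of index sets that covers the indices and separates them.
Identifying the indices with the subsets of an `n`-element set, the sets
`{i | k belongs to the subset of i}` separate them, and adding the set of all indices
gives `n + 1` sets in all. The complements of the `a i` are then finite unions of these unions
and of their complements, so no cylindrification, substitution or diagonal is needed. -/

open scoped Function

namespace QPEA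

section GeneratedSubalgebra

variable {α κ : Type*} {S X : Set (Set (α → ℚ))}

theorem Sg_subset_of_subset_Sg (h : X ⊆ Sg S) : Sg X ⊆ Sg S := by
  intro x hx
  induction hx with
  | base hx => exact h hx
  | empty => exact .empty
  | top => exact .top
  | dgnl i j => exact .dgnl i j
  | union _ _ hx hy => exact .union hx hy
  | compl _ hx => exact .compl hx
  | cylin i _ hx => exact .cylin i hx
  | subst i j _ hx => exact .subst i j hx

theorem SgMem.biUnion {I : Set κ} (hI : I.Finite) {f : κ → Set (α → ℚ)}
    (h : ∀ i ∈ I, SgMem S (f i)) : SgMem S (⋃ i ∈ I, f i) := by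
  induction I, hI using Set.Finite.induction_on with
  | empty => simpa only [Set.biUnion_empty] using SgMem.empty
  | @insert i I _ _ ih =>
    rw [Set.biUnion_insert]
    exact .union (h i (Set.mem_insert i I)) (ih fun j hj => h j (Set.mem_insert_of_mem i hj))

end GeneratedSubalgebra

section SeparatingCover

variable {κ : Type*}

/-- A family of subsets of `κ` that covers `κ` and separates its points: the index sets of
unions from which a disjoint family indexed by `κ` can be recovered. -/
structure IsSeparatingCover (T : Set (Set κ)) : Prop where
  exists_mem : ∀ i, ∃ t ∈ T, i ∈ t
  eq_of_forall_mem_iff : ∀ i j, (∀ t ∈ T, i ∈ t ↔ j ∈ t) → i = j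

theorem exists_isSeparatingCover_ncard {n : ℕ} (hκ : Nat.card κ = 2 ^ n) :
    ∃ T : Set (Set κ), IsSeparatingCover T ∧ T.ncard = n + 1 := by
  have : Finite κ := Nat.finite_of_card_ne_zero (by simp [hκ])
  have hcard : Nat.card κ = Nat.card (Set (Fin n)) := by simp [hκ]
  obtain ⟨e⟩ : Nonempty (κ ≃ Set (Fin n)) := Finite.card_eq.1 hcard
  let slice (k : Fin n) : Set κ := {i | k ∈ e i}
  have slice_injective : Function.Injective slice := by
    intro k l hkl
    have hk : e.symm {k} ∈ slice k := by simp [slice]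
    rw [hkl] at hk
    simpa [slice, eq_comm] using hk
  have univ_notMem : Set.univ ∉ Set.range slice := by
    rintro ⟨k, hk⟩
    have hempty : e.symm ∅ ∈ slice k := hk ▸ Set.mem_univ _
    simp [slice] at hempty
  refine ⟨insert Set.univ (Set.range slice), ⟨fun i => ?_, fun i j hij => ?_⟩, ?_⟩
  · exact ⟨Set.univ, Set.mem_insert _ _, Set.mem_univ i⟩
  · refine e.injective (Set.ext fun k => ?_)
    exact hij (slice k) (Set.mem_insert_of_mem _ (Set.mem_range_self k))
  · rw [Set.ncard_insert_of_notMem univ_notMem, Set.ncard_range_of_injective slice_injective,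
      Nat.card_fin]

end SeparatingCover

section DisjointFamily

variable {α κ β : Type*}

theorem mem_biUnion_iff_of_pairwise_disjoint {a : κ → Set β} (ha : Pairwise (Disjoint on a))
    {i : κ} {s : β} (hs : s ∈ a i) (t : Set κ) : s ∈ ⋃ j ∈ t, a j ↔ i ∈ t := by
  refine ⟨fun h => ?_, fun hi => Set.mem_biUnion hi hs⟩
  obtain ⟨j, hj, hsj⟩ := Set.mem_iUnion₂.1 h
  rwa [ha.eq (Set.not_disjoint_iff.2 ⟨s, hs, hsj⟩)]

theorem IsSeparatingCover.mem_iff_forall_mem_biUnion_iff {T : Set (Set κ)}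
    (hT : IsSeparatingCover T) {a : κ → Set β} (ha : Pairwise (Disjoint on a)) {i : κ} {s : β} :
    s ∈ a i ↔ ∀ t ∈ T, (s ∈ ⋃ j ∈ t, a j) ↔ i ∈ t := by
  refine ⟨fun hs t _ => mem_biUnion_iff_of_pairwise_disjoint ha hs t, fun h => ?_⟩
  obtain ⟨t, ht, hit⟩ := hT.exists_mem i
  obtain ⟨j, -, hsj⟩ := Set.mem_iUnion₂.1 ((h t ht).2 hit)
  have hij : i = j := hT.eq_of_forall_mem_iff i j fun u hu =>
    (h u hu).symm.trans (mem_biUnion_iff_of_pairwise_disjoint ha hsj u)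
  rwa [hij]

theorem IsSeparatingCover.eq_diff_biUnion {T : Set (Set κ)} (hT : IsSeparatingCover T)
    {a : κ → Set β} (ha : Pairwise (Disjoint on a)) {w : Set β} {i : κ} (haw : a i ⊆ w) :
    a i = w \ ((⋃ t ∈ {t ∈ T | i ∈ t}, w \ ⋃ j ∈ t, a j) ∪
      ⋃ t ∈ {t ∈ T | i ∉ t}, ⋃ j ∈ t, a j) := by
  ext s
  have mem_iff := hT.mem_iff_forall_mem_biUnion_iff ha (i := i) (s := s)
  constructor
  · intro hs
    refine ⟨haw hs, ?_⟩
    rintro (h | h)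
    · obtain ⟨t, ⟨ht, hit⟩, -, hst⟩ := Set.mem_iUnion₂.1 h
      exact hst ((mem_iff.1 hs t ht).2 hit)
    · obtain ⟨t, ⟨ht, hit⟩, hst⟩ := Set.mem_iUnion₂.1 h
      exact hit ((mem_iff.1 hs t ht).1 hst)
  · rintro ⟨hsw, hs⟩
    refine mem_iff.2 fun t ht => ⟨fun hst => ?_, fun hit => ?_⟩
    · by_contra hit
      exact hs (.inr (Set.mem_biUnion ⟨ht, hit⟩ hst))
    · by_contra hst
      exact hs (.inl (Set.mem_biUnion ⟨ht, hit⟩ ⟨hsw, hst⟩))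

variable [Finite κ] {a : κ → Set (α → ℚ)} {T : Set (Set κ)}

theorem image_biUnion_subset_Sg_range :
    (fun t => ⋃ i ∈ t, a i) '' T ⊆ Sg (Set.range a) := by
  rintro _ ⟨t, -, rfl⟩
  exact .biUnion t.toFinite fun i _ => .base (Set.mem_range_self i)

theorem IsSeparatingCover.Sg_image_biUnion (hT : IsSeparatingCover T)
    (ha : Pairwise (Disjoint on a)) (haW : ∀ i, a i ⊆ W α) :
    Sg ((fun t => ⋃ i ∈ t, a i) '' T) = Sg (Set.range a) := by
  refine (Sg_subset_of_subset_Sg image_biUnion_subset_Sg_range).antisymm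
    (Sg_subset_of_subset_Sg ?_)
  rintro _ ⟨i, rfl⟩
  have base {t : Set κ} (ht : t ∈ T) :
      SgMem ((fun t => ⋃ i ∈ t, a i) '' T) (⋃ j ∈ t, a j) := .base ⟨t, ht, rfl⟩
  rw [hT.eq_diff_biUnion ha (haW i)]
  exact .compl <| .union (.biUnion (Set.toFinite _) fun t ht => .compl (base ht.1))
    (.biUnion (Set.toFinite _) fun t ht => base ht.1)

end DisjointFamily

section Hyperplane

variable {α : Type*}

theorem poly_subset_W (t : ℚ) (r : α → ℚ) : poly t r ⊆ W α := fun _ hs => hs.1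

theorem pairwise_disjoint_poly (r : α → ℚ) : Pairwise (Disjoint on fun t => poly t r) :=
  fun _ _ htu => Set.disjoint_left.2 fun _ ht hu => htu (ht.2.trans hu.2.symm)

theorem poly_nonempty {r : α → ℚ} (hr : r ≠ 0) (t : ℚ) : (poly t r).Nonempty := by
  obtain ⟨i, hi⟩ := Function.ne_iff.1 hr
  refine ⟨Pi.single i (t / r i), (Set.finite_singleton i).subset Pi.support_single_subset, ?_⟩
  rw [finsum_eq_single _ i fun j hj => by rw [Pi.single_eq_of_ne hj, mul_zero],
    Pi.single_eq_same, mul_div_cancel₀ t hi]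

theorem pairwise_disjoint_aElem : Pairwise (Disjoint on (aElem : ℕ → Set (α → ℚ))) :=
  (pairwise_disjoint_poly _).comp_of_injective Nat.cast_injective

theorem aElem_nonempty [Nonempty α] (m : ℕ) : (aElem m : Set (α → ℚ)).Nonempty :=
  poly_nonempty one_ne_zero m

theorem setOf_aElem_lt_eq_range (N : ℕ) :
    {x : Set (α → ℚ) | ∃ i : ℕ, i < N ∧ x = aElem i} = Set.range fun i : Fin N => aElem i := by
  ext x
  simp only [Set.mem_ofPred_eq, Set.mem_range, Fin.exists_iff, exists_prop, eq_comm]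

end Hyperplane

end QPEA

theorem stmt1_general {α κ : Type*} {n : ℕ} (hκ : Nat.card κ = 2 ^ n) {a : κ → Set (α → ℚ)}
    (ha : Pairwise (Disjoint on a)) (hne : ∀ i, (a i).Nonempty) (haW : ∀ i, a i ⊆ W α) :
    ∃ X : Set (Set (α → ℚ)),
      X ⊆ Sg (Set.range a) ∧ X.Finite ∧ X.ncard = n + 1 ∧ Sg X = Sg (Set.range a) := by
  have : Finite κ := Nat.finite_of_card_ne_zero (by simp [hκ])
  obtain ⟨T, hT, hcard⟩ := exists_isSeparatingCover_ncard hκ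
  refine ⟨(fun t => ⋃ i ∈ t, a i) '' T, image_biUnion_subset_Sg_range, Set.toFinite _, ?_,
    hT.Sg_image_biUnion ha haW⟩
  rw [Set.ncard_image_of_injective T (ha.biUnion_injective hne), hcard]

/-- For every natural number `n`, the algebra `A_n` (the subalgebra of `C`
generated by `{a_i : i < 2^n}`) can be generated by `n+1` elements: there is a subset
`X` of `A_n` with `|X| = n + 1` whose generated subalgebra is `A_n`. -/
theorem stmt1 {α : Type*} [Infinite α] (n : ℕ) :
    ∃ X : Set (Set (α → ℚ)),
      X ⊆ Sg {x : Set (α → ℚ) | ∃ i : ℕ, i < 2 ^ n ∧ x = aElem i} ∧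
      X.Finite ∧ X.ncard = n + 1 ∧
      Sg X = Sg {x : Set (α → ℚ) | ∃ i : ℕ, i < 2 ^ n ∧ x = aElem i} := by
  rw [setOf_aElem_lt_eq_range]
  exact stmt1_general (Nat.card_fin _) (pairwise_disjoint_aElem.comp_of_injective Fin.val_injective)
    (fun i => aElem_nonempty i) fun i => poly_subset_W i _
end

section
/- The algebra A = Sg^C(Pol), the subalgebra of C generated by Pol, is simple, and moreover every subalgebra of A is simple. -/
/- Every element `X` of `A` is invariant under a large group of translations: for some finite
`F ⊆ α`, membership in `X` survives adding any `v ∈ V` that vanishes on `F` and has total `0`.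
If such an `X` is nonempty, then any `s ∈ V` can be reached from a point `x ∈ X` by translating
so as to copy `s` off `F`, with a single coordinate `k ∉ F` spent on making the total `0`.
(If `F = α` there is no such `k`, but then any point of `X` agrees with `s` off `F`.) Hence
finitely many cylindrifications, along `F` and `k`, take `X` to `V`, and an ideal containing `X`
contains everything. -/

/- Formalization of quasi-polyadic equality set algebras over the weak space
   `V = {s : α → ℚ | s i ≠ 0 for finitely many i}`, where the infinite ordinal α
   is formalized as an infinite type. -/

open scoped Classical

open QPEA

namespace QPEA

variable {α : Type*}

section ZeroSum

/-- The additive group of points of the weak space that vanish on `F` and have coordinate sum `0`.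
They serve as the translations under which elements of `Sg (Pol α)` are invariant. -/
def zeroSumOff (F : Set α) : AddSubgroup (α → ℚ) where
  carrier := {v | v ∈ W α ∧ Set.EqOn v 0 F ∧ ∑ᶠ i, v i = 0}
  zero_mem' := ⟨by simp [W], fun _ _ => rfl, finsum_zero⟩
  add_mem' := by
    rintro v w ⟨hv, hvF, hv0⟩ ⟨hw, hwF, hw0⟩
    refine ⟨Function.HasFiniteSupport.add hv hw, fun i hi => ?_, ?_⟩
    · simp [hvF hi, hwF hi]
    · simp only [Pi.add_apply, finsum_add_distrib hv hw, hv0, hw0, add_zero]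
  neg_mem' := by
    rintro v ⟨hv, hvF, hv0⟩
    refine ⟨Function.HasFiniteSupport.neg hv, fun i hi => ?_, ?_⟩
    · simp [hvF hi]
    · simp only [Pi.neg_apply, finsum_neg_distrib, hv0, neg_zero]

variable {F F' : Set α} {v : α → ℚ}

theorem zeroSumOff_anti (h : F ⊆ F') : zeroSumOff F' ≤ zeroSumOff F :=
  fun _ ⟨hv, hvF, hv0⟩ => ⟨hv, hvF.mono h, hv0⟩

theorem add_mem_W_of_mem_zeroSumOff {s : α → ℚ} (hs : s ∈ W α) (hv : v ∈ zeroSumOff F) :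
    s + v ∈ W α :=
  Function.HasFiniteSupport.add hs hv.1

theorem comp_perm_mem_zeroSumOff (e : Equiv.Perm α) (hv : v ∈ zeroSumOff (e '' F)) :
    v ∘ e ∈ zeroSumOff F := by
  obtain ⟨hv, hvF, hv0⟩ := hv
  exact ⟨Set.Finite.preimage e.injective.injOn hv,
    fun i hi => hvF (Set.mem_image_of_mem e hi), (finsum_comp_equiv e).trans hv0⟩

theorem finsum_mul_eq_zero_of_mem_zeroSumOff {r : α → ℚ} {c : ℚ}
    (hv : v ∈ zeroSumOff {i | r i ≠ c}) : ∑ᶠ i, r i * v i = 0 := by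
  obtain ⟨-, hvF, hv0⟩ := hv
  have hrc (i : α) : r i * v i = c * v i := by
    by_cases hi : r i = c
    · rw [hi]
    · simp [hvF hi]
  rw [finsum_congr hrc, ← mul_finsum, hv0, mul_zero]

theorem sub_single_finsum_mem_zeroSumOff {k : α} (hv : v ∈ W α) (hvF : Set.EqOn v 0 F)
    (hk : k ∉ F) : v - Pi.single k (∑ᶠ i, v i) ∈ zeroSumOff F := by
  set c := ∑ᶠ i, v i with hc
  have hsingle : (Pi.single k c : α → ℚ) ∈ W α :=
    (Set.finite_singleton k).subset Pi.support_single_subset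
  have hsum : ∑ᶠ i, (Pi.single k c : α → ℚ) i = c := by
    rw [finsum_eq_single _ k fun i hi => by simp [hi], Pi.single_eq_same]
  refine ⟨Function.HasFiniteSupport.sub hv hsingle, fun i hi => ?_, ?_⟩
  · simp [hvF hi, Pi.single_eq_of_ne (ne_of_mem_of_not_mem hi hk)]
  · simp only [Pi.sub_apply, finsum_sub_distrib hv hsingle, hsum, ← hc, sub_self]

end ZeroSum

/-- The invariant carried through the generation of `Sg (Pol α)`: membership in `X` depends only
on the coordinates in `F` and on the sum of all coordinates. It is stated as invariance under
translations, so that the same translation can be applied to a witness of a cylindrification. -/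
def ZeroSumInvariant (F : Set α) (X : Set (α → ℚ)) : Prop :=
  X ⊆ W α ∧ ∀ s ∈ X, ∀ v ∈ zeroSumOff F, s + v ∈ X

namespace ZeroSumInvariant

variable {F F' : Set α} {X Y : Set (α → ℚ)}

theorem mono (hX : ZeroSumInvariant F X) (h : F ⊆ F') : ZeroSumInvariant F' X :=
  ⟨hX.1, fun s hs v hv => hX.2 s hs v (zeroSumOff_anti h hv)⟩

theorem empty : ZeroSumInvariant F (∅ : Set (α → ℚ)) :=
  ⟨Set.empty_subset _, fun _ hs => hs.elim⟩

theorem weakSpace : ZeroSumInvariant F (W α) :=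
  ⟨subset_rfl, fun _ hs _ hv => add_mem_W_of_mem_zeroSumOff hs hv⟩

theorem union (hX : ZeroSumInvariant F X) (hY : ZeroSumInvariant F' Y) :
    ZeroSumInvariant (F ∪ F') (X ∪ Y) := by
  have hX' := hX.mono (Set.subset_union_left (t := F'))
  have hY' := hY.mono (Set.subset_union_right (s := F))
  exact ⟨Set.union_subset hX.1 hY.1, fun s hs v hv =>
    hs.imp (fun h => hX'.2 s h v hv) (fun h => hY'.2 s h v hv)⟩

theorem compl (hX : ZeroSumInvariant F X) : ZeroSumInvariant F (W α \ X) := by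
  refine ⟨Set.sdiff_subset, ?_⟩
  rintro s ⟨hs, hsX⟩ v hv
  refine ⟨add_mem_W_of_mem_zeroSumOff hs hv, fun h => hsX ?_⟩
  simpa using hX.2 (s + v) h (-v) (neg_mem hv)

theorem diag (i j : α) : ZeroSumInvariant {i, j} (diag i j) := by
  refine ⟨fun s hs => hs.1, ?_⟩
  rintro s ⟨hs, hij⟩ v hv
  refine ⟨add_mem_W_of_mem_zeroSumOff hs hv, ?_⟩
  have hvi : v i = 0 := hv.2.1 (by simp)
  have hvj : v j = 0 := hv.2.1 (by simp)
  simp [hij, hvi, hvj]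

theorem cyl (hX : ZeroSumInvariant F X) (i : α) : ZeroSumInvariant F (cyl i X) := by
  refine ⟨fun s hs => hs.1, ?_⟩
  rintro s ⟨hs, t, ht, hts⟩ v hv
  exact ⟨add_mem_W_of_mem_zeroSumOff hs hv, t + v, hX.2 t ht v hv,
    fun j hj => congrArg (· + v j) (hts j hj)⟩

theorem sub (hX : ZeroSumInvariant F X) (i j : α) :
    ZeroSumInvariant (Equiv.swap i j '' F) (sub i j X) := by
  refine ⟨fun s hs => hs.1, ?_⟩
  rintro s ⟨hs, hsX⟩ v hv
  exact ⟨add_mem_W_of_mem_zeroSumOff hs hv,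
    hX.2 _ hsX _ (comp_perm_mem_zeroSumOff (Equiv.swap i j) hv)⟩

theorem poly (t : ℚ) (r : α → ℚ) (c : ℚ) : ZeroSumInvariant {i | r i ≠ c} (poly t r) := by
  refine ⟨fun s hs => hs.1, ?_⟩
  rintro s ⟨hs, hst⟩ v hv
  refine ⟨add_mem_W_of_mem_zeroSumOff hs hv, ?_⟩
  simp only [Pi.add_apply, mul_add]
  rw [finsum_add_distrib (Function.HasFiniteSupport.fun_mul_right r hs)
    (Function.HasFiniteSupport.fun_mul_right r hv.1),
    finsum_mul_eq_zero_of_mem_zeroSumOff hv, add_zero, hst]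

end ZeroSumInvariant

theorem exists_zeroSumInvariant_of_mem_Sg_Pol {X : Set (α → ℚ)} (hX : X ∈ Sg (Pol α)) :
    ∃ F : Set α, F.Finite ∧ ZeroSumInvariant F X := by
  induction hX with
  | base h =>
    obtain ⟨t, r, hr | hr, rfl⟩ := h
    · exact ⟨_, hr, .poly t r 0⟩
    · exact ⟨_, hr, .poly t r 1⟩
  | empty => exact ⟨∅, Set.finite_empty, .empty⟩
  | top => exact ⟨∅, Set.finite_empty, .weakSpace⟩
  | dgnl i j => exact ⟨{i, j}, Set.toFinite _, .diag i j⟩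
  | union _ _ ihX ihY =>
    obtain ⟨F, hF, hX⟩ := ihX
    obtain ⟨F', hF', hY⟩ := ihY
    exact ⟨F ∪ F', hF.union hF', hX.union hY⟩
  | compl _ ih => exact ih.imp fun _ ⟨hF, hX⟩ => ⟨hF, hX.compl⟩
  | cylin i _ ih => exact ih.imp fun _ ⟨hF, hX⟩ => ⟨hF, hX.cyl i⟩
  | subst i j _ ih =>
    obtain ⟨F, hF, hX⟩ := ih
    exact ⟨Equiv.swap i j '' F, hF.image _, hX.sub i j⟩

section Cylindrification

/-- Cylindrification along a set `F` of coordinates; for finite `F` it is the composite of the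
`cyl i` with `i ∈ F`. -/
def cylOver (F : Set α) (X : Set (α → ℚ)) : Set (α → ℚ) :=
  {s | s ∈ W α ∧ ∃ t ∈ X, Set.EqOn t s Fᶜ}

variable {F : Set α} {X : Set (α → ℚ)}

theorem update_mem_W {s : α → ℚ} (hs : s ∈ W α) (i : α) (c : ℚ) : Function.update s i c ∈ W α := by
  refine (Set.Finite.insert i hs).subset fun j hj => ?_
  rcases eq_or_ne j i with rfl | hji
  · exact Set.mem_insert j _
  · exact Or.inr (by simpa [hji] using hj)

theorem cylOver_empty (hX : X ⊆ W α) : cylOver ∅ X = X := by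
  ext s
  constructor
  · rintro ⟨-, t, ht, hts⟩
    rwa [← Set.eqOn_univ t s |>.1 (Set.compl_empty ▸ hts)]
  · exact fun hs => ⟨hX hs, s, hs, Set.eqOn_refl s _⟩

theorem cylOver_insert (i : α) (F : Set α) (X : Set (α → ℚ)) :
    cylOver (insert i F) X = cyl i (cylOver F X) := by
  ext s
  constructor
  · rintro ⟨hs, t, ht, hts⟩
    refine ⟨hs, Function.update s i (t i), ⟨update_mem_W hs i (t i), t, ht, fun j hj => ?_⟩,
      fun j hj => Function.update_of_ne hj _ _⟩
    rcases eq_or_ne j i with rfl | hji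
    · simp
    · rw [Function.update_of_ne hji]
      exact hts (by simpa [hji] using hj)
  · rintro ⟨hs, u, ⟨-, t, ht, htu⟩, hus⟩
    refine ⟨hs, t, ht, fun j hj => ?_⟩
    obtain ⟨hji, hjF⟩ : j ≠ i ∧ j ∉ F := by simpa using hj
    exact (htu hjF).trans (hus j hji)

theorem cylOver_mem_of_forall_cyl_mem {I : Set (Set (α → ℚ))}
    (hcyl : ∀ Y ∈ I, ∀ i, cyl i Y ∈ I) (hF : F.Finite) (hX : X ∈ I) (hXW : X ⊆ W α) :
    cylOver F X ∈ I := by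
  induction F, hF using Set.Finite.induction_on with
  | empty => rwa [cylOver_empty hXW]
  | @insert i F _ _ ih => exact cylOver_insert i F X ▸ hcyl _ ih i

theorem ZeroSumInvariant.cylOver_insert_eq_W (hX : ZeroSumInvariant F X) (hne : X.Nonempty)
    {k : α} (hk : k ∉ F) : cylOver (insert k F) X = W α := by
  refine Set.Subset.antisymm (fun s hs => hs.1) fun s hs => ?_
  obtain ⟨x, hx⟩ := hne
  set w : α → ℚ := Fᶜ.indicator (s - x)
  have hw : w ∈ W α := by
    refine (Function.HasFiniteSupport.sub hs (hX.1 hx)).subset ?_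
    exact Set.support_indicator.trans_subset Set.inter_subset_right
  have hwF : Set.EqOn w 0 F := fun i hi => Set.indicator_of_notMem (not_not_intro hi) _
  refine ⟨hs, _, hX.2 x hx _ (sub_single_finsum_mem_zeroSumOff hw hwF hk), fun j hj => ?_⟩
  obtain ⟨hjk, hjF⟩ : j ≠ k ∧ j ∉ F := by simpa using hj
  simp [w, hjk, hjF]

theorem cylOver_univ (hne : X.Nonempty) : cylOver Set.univ X = W α := by
  obtain ⟨x, hx⟩ := hne
  exact Set.Subset.antisymm (fun s hs => hs.1) fun s hs => ⟨hs, x, hx, by simp⟩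

theorem ZeroSumInvariant.exists_cylOver_eq_W (hX : ZeroSumInvariant F X) (hF : F.Finite)
    (hne : X.Nonempty) : ∃ F' : Set α, F'.Finite ∧ cylOver F' X = W α := by
  rcases eq_or_ne F Set.univ with rfl | hF_ne
  · exact ⟨Set.univ, hF, cylOver_univ hne⟩
  · obtain ⟨k, hk⟩ := (Set.ne_univ_iff_exists_notMem F).1 hF_ne
    exact ⟨insert k F, hF.insert k, hX.cylOver_insert_eq_W hne hk⟩

end Cylindrification

theorem simple_of_forall_zeroSumInvariant {B : Set (Set (α → ℚ))}
    (hB : ∀ X ∈ B, ∃ F : Set α, F.Finite ∧ ZeroSumInvariant F X) : Simple B := by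
  rintro I ⟨hI_ne, hIB, hdown, -, hcyl, -⟩
  by_cases h : ∃ X ∈ I, X.Nonempty
  · right
    obtain ⟨X, hXI, hX_ne⟩ := h
    obtain ⟨F, hF, hX⟩ := hB X (hIB hXI)
    obtain ⟨F', hF', hXW⟩ := hX.exists_cylOver_eq_W hF hX_ne
    have hWI : W α ∈ I := hXW ▸ cylOver_mem_of_forall_cyl_mem hcyl hF' hXI hX.1
    refine hIB.antisymm fun Y hY => ?_
    obtain ⟨-, -, hYW, -⟩ := hB Y hY
    exact hdown _ hWI Y hY hYW
  · left
    push Not at h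
    exact Set.eq_singleton_iff_nonempty_unique_mem.2 ⟨hI_ne, h⟩

end QPEA

theorem stmt4_general {α : Type*} {B : Set (Set (α → ℚ))} (hB : B ⊆ Sg (Pol α)) : Simple B :=
  simple_of_forall_zeroSumInvariant fun _ hX => exists_zeroSumInvariant_of_mem_Sg_Pol (hB hX)

/-- The algebra `A = Sg^C(Pol)` is simple, and every subalgebra of `A`
is simple. -/
theorem stmt4 {α : Type*} [Infinite α] :
    Simple (Sg (Pol α)) ∧
    ∀ B : Set (Set (α → ℚ)), IsSubuniv B → B ⊆ Sg (Pol α) → Simple B :=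
  ⟨stmt4_general subset_rfl, fun _ _ hB => stmt4_general hB⟩
end

section
/- Let β be an ordinal, U a set with at least two elements, and k, l < β with k ≠ l. Let X, Y ⊆ ^βU (the set of all functions from β to U) satisfy c_k X = X and c_k Y = Y, where c_k Z = {s ∈ ^βU : ∃t ∈ Z with t_j = s_j for all j ≠ k}, and let d_kl = {s ∈ ^βU : s_k = s_l}. Put b = (X ∩ d_kl) ∪ (Y ∖ d_kl). Then c_k(b ∩ d_kl) = X and c_k(b ∖ d_kl) = Y. -/
/-- Cylindrification on coordinate `k`, on the full function space `^βU`. -/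
def cylK {β U : Type*} (k : β) (Z : Set (β → U)) : Set (β → U) :=
  {s | ∃ t ∈ Z, ∀ j, j ≠ k → t j = s j}

/-- The diagonal `d_kl = {s ∈ ^βU | s k = s l}`. -/
def dEq {β U : Type*} (k l : β) : Set (β → U) := {s : β → U | s k = s l}

/-! Since `c_k (Z ∩ c_k W) = c_k Z ∩ c_k W`, a set `X` with `c_k X = X` is recovered as
`c_k (X ∩ W)` from its trace on any `W` with `c_k W = ^βU`. Both the diagonal `d_kl` and its
complement are such sets `W`, and `b` has the trace of `X` on the first and that of `Y` on the
second. -/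

section Cylindrification

variable {β U : Type*} {k l : β}

theorem mem_cylK_iff_exists_update_mem [DecidableEq β] {Z : Set (β → U)} {s : β → U} :
    s ∈ cylK k Z ↔ ∃ u, Function.update s k u ∈ Z := by
  constructor
  · rintro ⟨t, ht, hts⟩
    have update_eq : Function.update s k (t k) = t :=
      Function.update_eq_iff.2 ⟨rfl, fun j hj => (hts j hj).symm⟩
    exact ⟨t k, update_eq.symm ▸ ht⟩
  · rintro ⟨u, hu⟩
    exact ⟨_, hu, fun j hj => Function.update_of_ne hj u s⟩

theorem cylK_inter_cylK (Z W : Set (β → U)) :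
    cylK k (Z ∩ cylK k W) = cylK k Z ∩ cylK k W := by
  classical
  ext s
  simp only [Set.mem_inter_iff, mem_cylK_iff_exists_update_mem, Function.update_idem,
    exists_and_right]

theorem cylK_inter_eq_self {X W : Set (β → U)} (hX : cylK k X = X) (hW : cylK k W = Set.univ) :
    cylK k (X ∩ W) = X :=
  calc
    cylK k (X ∩ W) = cylK k (W ∩ cylK k X) := by rw [hX, Set.inter_comm]
    _ = cylK k W ∩ cylK k X := cylK_inter_cylK W X
    _ = X := by rw [hW, Set.univ_inter, hX]

theorem update_mem_dEq_iff [DecidableEq β] (hkl : k ≠ l) {s : β → U} {u : U} :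
    Function.update s k u ∈ dEq k l ↔ u = s l := by
  simp only [dEq, Set.mem_ofPred_eq, Function.update_self, Function.update_of_ne hkl.symm]

theorem cylK_dEq_eq_univ (hkl : k ≠ l) : cylK k (dEq k l : Set (β → U)) = Set.univ := by
  classical
  refine Set.eq_univ_of_forall fun s => mem_cylK_iff_exists_update_mem.2 ?_
  exact ⟨s l, (update_mem_dEq_iff hkl).2 rfl⟩

theorem cylK_compl_dEq_eq_univ [Nontrivial U] (hkl : k ≠ l) :
    cylK k (dEq k l : Set (β → U))ᶜ = Set.univ := by
  classical
  refine Set.eq_univ_of_forall fun s => mem_cylK_iff_exists_update_mem.2 ?_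
  obtain ⟨u, hu⟩ := exists_ne (s l)
  exact ⟨u, mt (update_mem_dEq_iff hkl).1 hu⟩

end Cylindrification

/-- Let `U` have at least two elements, `k ≠ l`, and `X, Y ⊆ ^βU`
with `c_k X = X` and `c_k Y = Y`.  Put `b = (X ∩ d_kl) ∪ (Y ∖ d_kl)`.  Then
`c_k (b ∩ d_kl) = X` and `c_k (b ∖ d_kl) = Y`. -/
theorem stmt13 {β U : Type*} [Nontrivial U] (k l : β) (hkl : k ≠ l)
    (X Y : Set (β → U)) (hX : cylK k X = X) (hY : cylK k Y = Y) :
    cylK k (((X ∩ dEq k l) ∪ (Y \ dEq k l)) ∩ dEq k l) = X ∧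
    cylK k (((X ∩ dEq k l) ∪ (Y \ dEq k l)) \ dEq k l) = Y := by
  have trace_on_diagonal : ((X ∩ dEq k l) ∪ (Y \ dEq k l)) ∩ dEq k l = X ∩ dEq k l :=
    Set.ite_inter_self (dEq k l) X Y
  have trace_off_diagonal : ((X ∩ dEq k l) ∪ (Y \ dEq k l)) \ dEq k l = Y ∩ (dEq k l)ᶜ :=
    Set.ite_sdiff_self (dEq k l) X Y
  rw [trace_on_diagonal, trace_off_diagonal]
  exact ⟨cylK_inter_eq_self hX (cylK_dEq_eq_univ hkl),
    cylK_inter_eq_self hY (cylK_compl_dEq_eq_univ hkl)⟩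
end

section
/- Let α < β be ordinals, B a polyadic equality algebra of dimension β, and A = Nr_α B its neat α-reduct. If A generates B and A is simple, then B is simple. -/
/- Abstract polyadic equality algebras of dimension `β` (the dimension ordinal is
   formalized as a type `β`), following the Halmos axiomatization described in the
   paper: a Boolean algebra with cylindrifications `c_(Γ)` for `Γ ⊆ β`,
   substitutions `s_τ` for `τ : β → β`, and diagonal elements `d_ij`. -/

open scoped Classical

universe u v w

/-- A polyadic equality algebra of dimension `β` (`PEA_β`). -/
class PEA (β : Type u) (A : Type v) extends BooleanAlgebra A where
  cyl : Set β → A → A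
  sub : (β → β) → A → A
  diag : β → β → A
  cyl_bot : ∀ Γ : Set β, cyl Γ ⊥ = ⊥
  le_cyl : ∀ (Γ : Set β) (x : A), x ≤ cyl Γ x
  cyl_inf : ∀ (Γ : Set β) (x y : A), cyl Γ (x ⊓ cyl Γ y) = cyl Γ x ⊓ cyl Γ y
  cyl_cyl : ∀ (Γ Δ : Set β) (x : A), cyl Γ (cyl Δ x) = cyl (Γ ∪ Δ) x
  sub_id : ∀ x : A, sub id x = x
  sub_comp : ∀ (σ τ : β → β) (x : A), sub σ (sub τ x) = sub (σ ∘ τ) x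
  sub_sup : ∀ (σ : β → β) (x y : A), sub σ (x ⊔ y) = sub σ x ⊔ sub σ y
  sub_compl : ∀ (σ : β → β) (x : A), sub σ xᶜ = (sub σ x)ᶜ
  sub_cyl_congr : ∀ (σ τ : β → β) (Γ : Set β) (x : A),
    (∀ i ∉ Γ, σ i = τ i) → sub σ (cyl Γ x) = sub τ (cyl Γ x)
  cyl_sub : ∀ (τ : β → β) (Γ : Set β) (x : A),
    Set.InjOn τ (τ ⁻¹' Γ) → cyl Γ (sub τ x) = sub τ (cyl (τ ⁻¹' Γ) x)
  diag_refl : ∀ i : β, diag i i = ⊤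
  sub_diag : ∀ (τ : β → β) (i j : β), sub τ (diag i j) = diag (τ i) (τ j)
  inf_diag_le : ∀ (i j : β) (x : A),
    x ⊓ diag i j ≤ sub (fun k => if k = i then j else k) x

namespace PEA

/-- The universe of the neat `J`-reduct (`J`-compression) `Nr_J B`:
elements `a` with `c_(β∖J) a = a`. -/
def NrSet (β : Type u) (A : Type v) [PEA β A] (J : Set β) : Set A :=
  {a : A | cyl Jᶜ a = a}

/-- The extension `τ̄ : β → β` of `τ : J → J` by the identity on `β ∖ J`. -/
noncomputable def extMap {β : Type u} (J : Set β) (τ : J → J) : β → β :=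
  fun i => if h : i ∈ J then (τ ⟨i, h⟩ : β) else i

/-- An ideal of a `PEA_β`: a Boolean ideal closed under all `c_(Γ)` and all `s_τ`. -/
def IsIdeal (β : Type u) {A : Type v} [PEA β A] (I : Set A) : Prop :=
  (⊥ : A) ∈ I ∧
  (∀ x ∈ I, ∀ y : A, y ≤ x → y ∈ I) ∧
  (∀ x ∈ I, ∀ y ∈ I, x ⊔ y ∈ I) ∧
  (∀ x ∈ I, ∀ Γ : Set β, cyl Γ x ∈ I) ∧
  (∀ x ∈ I, ∀ τ : β → β, sub τ x ∈ I)

/-- The ideal of a `PEA_β` generated by a subset `X`: the least ideal containing `X`. -/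
def IdealGen (β : Type u) {A : Type v} [PEA β A] (X : Set A) : Set A :=
  ⋂₀ {I : Set A | IsIdeal β I ∧ X ⊆ I}

/-- An ideal of the neat reduct `Nr_J B` (a `PEA` of dimension `J`): a Boolean ideal
of `Nr_J B` closed under the cylindrifications `c_(Γ)` for `Γ ⊆ J` and the
substitutions `s'_τ = s_τ̄` for `τ : J → J`. -/
def IsNrIdeal {β : Type u} {A : Type v} [PEA β A] (J : Set β) (I : Set A) : Prop :=
  I ⊆ NrSet β A J ∧ (⊥ : A) ∈ I ∧
  (∀ x ∈ I, ∀ y ∈ NrSet β A J, y ≤ x → y ∈ I) ∧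
  (∀ x ∈ I, ∀ y ∈ I, x ⊔ y ∈ I) ∧
  (∀ x ∈ I, ∀ Γ : Set β, Γ ⊆ J → cyl Γ x ∈ I) ∧
  (∀ x ∈ I, ∀ τ : J → J, sub (extMap J τ) x ∈ I)

/-- A subuniverse of a `PEA_β`: contains the diagonals and is closed under the
Boolean operations, all `c_(Γ)`, and all `s_τ`. -/
def IsSubuniv (β : Type u) {A : Type v} [PEA β A] (S : Set A) : Prop :=
  (⊥ : A) ∈ S ∧ (∀ x ∈ S, xᶜ ∈ S) ∧ (∀ x ∈ S, ∀ y ∈ S, x ⊔ y ∈ S) ∧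
  (∀ i j : β, (diag i j : A) ∈ S) ∧
  (∀ x ∈ S, ∀ Γ : Set β, cyl Γ x ∈ S) ∧
  (∀ x ∈ S, ∀ τ : β → β, sub τ x ∈ S)

/-- The subuniverse of a `PEA_β` generated by `X`. -/
def SgA (β : Type u) {A : Type v} [PEA β A] (X : Set A) : Set A :=
  ⋂₀ {S : Set A | IsSubuniv β S ∧ X ⊆ S}

/-- A `PEA_β` is simple: it is nontrivial and its only ideals are `{⊥}` and the
whole algebra (equivalently, it has exactly two congruences). -/
def Simple (β : Type u) (A : Type v) [PEA β A] : Prop :=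
  (⊥ : A) ≠ ⊤ ∧ ∀ I : Set A, IsIdeal β I → I = {⊥} ∨ I = Set.univ

/-- The neat reduct `Nr_J B` is simple: it is nontrivial and its only ideals are
`{⊥}` and all of `Nr_J B`. -/
def NrSimple {β : Type u} (A : Type v) [PEA β A] (J : Set β) : Prop :=
  (⊥ : A) ≠ ⊤ ∧ ∀ I : Set A, IsNrIdeal J I → I = {⊥} ∨ I = NrSet β A J

end PEA

open PEA

/- The trace `I ∩ Nr_J B` of an ideal `I` of `B` is an ideal of `Nr_J B`, and it determines `I`:
the element `c_(β) x` always lies in `Nr_J B`, and an ideal contains `x` exactly when it contains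
`c_(β) x`. If `Nr_J B` is simple, the trace of `I` is that of `{⊥}` or that of `B`, so `I` is one
of these. -/

namespace PEA

section Operations

variable {β : Type u} {A : Type v} [PEA β A]

theorem sub_cyl_univ (τ : β → β) (x : A) :
    sub τ (cyl (Set.univ : Set β) x) = cyl (Set.univ : Set β) x := by
  rw [sub_cyl_congr τ id Set.univ x fun i hi => (hi (Set.mem_univ i)).elim, sub_id]

theorem sub_bot (τ : β → β) : sub τ (⊥ : A) = ⊥ := by
  simpa only [cyl_bot] using sub_cyl_univ τ (⊥ : A)

end Operations

section ExtMap

variable {β : Type u} (J : Set β) (τ : J → J)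

theorem extMap_of_notMem {i : β} (hi : i ∉ J) : extMap J τ i = i :=
  dif_neg hi

theorem extMap_mem {i : β} (hi : i ∈ J) : extMap J τ i ∈ J := by
  rw [extMap, dif_pos hi]
  exact (τ ⟨i, hi⟩).2

theorem preimage_extMap_compl : extMap J τ ⁻¹' Jᶜ = Jᶜ := by
  ext i
  refine ⟨fun hi hiJ => hi (extMap_mem J τ hiJ), fun hi => ?_⟩
  rwa [Set.mem_preimage, extMap_of_notMem J τ hi]

theorem injOn_extMap_compl : Set.InjOn (extMap J τ) Jᶜ := by
  intro i hi j hj hij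
  rwa [extMap_of_notMem J τ hi, extMap_of_notMem J τ hj] at hij

end ExtMap

section NeatReduct

variable {β : Type u} {A : Type v} [PEA β A] {J : Set β} {x y : A}

theorem mem_nrSet : x ∈ NrSet β A J ↔ cyl Jᶜ x = x :=
  Iff.rfl

theorem bot_mem_nrSet : (⊥ : A) ∈ NrSet β A J :=
  cyl_bot Jᶜ

theorem compl_mem_nrSet (hx : x ∈ NrSet β A J) : xᶜ ∈ NrSet β A J := by
  have cyl_compl_inf : cyl Jᶜ xᶜ ⊓ x = ⊥ := by
    have h := cyl_inf Jᶜ xᶜ x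
    rwa [mem_nrSet.1 hx, compl_inf_eq_bot, cyl_bot, eq_comm] at h
  exact le_antisymm (le_compl_iff_disjoint_right.2 (disjoint_iff.2 cyl_compl_inf)) (le_cyl _ _)

theorem inf_mem_nrSet (hx : x ∈ NrSet β A J) (hy : y ∈ NrSet β A J) : x ⊓ y ∈ NrSet β A J := by
  have h := cyl_inf Jᶜ x y
  rwa [mem_nrSet.1 hx, mem_nrSet.1 hy] at h

theorem sup_mem_nrSet (hx : x ∈ NrSet β A J) (hy : y ∈ NrSet β A J) : x ⊔ y ∈ NrSet β A J := by
  simpa only [compl_inf, compl_compl] using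
    compl_mem_nrSet (inf_mem_nrSet (compl_mem_nrSet hx) (compl_mem_nrSet hy))

theorem cyl_mem_nrSet (Γ : Set β) (hx : x ∈ NrSet β A J) : cyl Γ x ∈ NrSet β A J := by
  rw [mem_nrSet, cyl_cyl, Set.union_comm, ← cyl_cyl, mem_nrSet.1 hx]

theorem cyl_mem_nrSet_of_compl_subset {Γ : Set β} (hΓ : Jᶜ ⊆ Γ) (x : A) :
    cyl Γ x ∈ NrSet β A J := by
  rw [mem_nrSet, cyl_cyl, Set.union_eq_self_of_subset_left hΓ]

theorem sub_extMap_mem_nrSet (τ : J → J) (hx : x ∈ NrSet β A J) :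
    sub (extMap J τ) x ∈ NrSet β A J := by
  have preimage_eq := preimage_extMap_compl J τ
  have injOn : Set.InjOn (extMap J τ) (extMap J τ ⁻¹' Jᶜ) := by
    rw [preimage_eq]
    exact injOn_extMap_compl J τ
  rw [mem_nrSet, cyl_sub _ _ _ injOn, preimage_eq, mem_nrSet.1 hx]

end NeatReduct

section Ideals

variable {β : Type u} {A : Type v} [PEA β A]

theorem isIdeal_singleton_bot : IsIdeal β ({⊥} : Set A) := by
  refine ⟨rfl, ?_, ?_, ?_, ?_⟩
  · rintro _ rfl y hy
    exact le_bot_iff.1 hy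
  · rintro _ rfl _ rfl
    exact sup_idem ⊥
  · rintro _ rfl Γ
    exact cyl_bot Γ
  · rintro _ rfl τ
    exact sub_bot τ

theorem isIdeal_univ : IsIdeal β (Set.univ : Set A) := by
  simp only [IsIdeal, Set.mem_univ, implies_true, and_self]

namespace IsIdeal

variable {I I' : Set A}

theorem cyl_mem_iff (hI : IsIdeal β I) (Γ : Set β) {x : A} : cyl Γ x ∈ I ↔ x ∈ I := by
  obtain ⟨-, mem_of_le, -, cyl_mem, -⟩ := hI
  exact ⟨fun h => mem_of_le _ h x (le_cyl Γ x), fun h => cyl_mem x h Γ⟩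

theorem isNrIdeal_inter_nrSet (hI : IsIdeal β I) (J : Set β) :
    IsNrIdeal J (I ∩ NrSet β A J) := by
  obtain ⟨bot_mem, mem_of_le, sup_mem, cyl_mem, sub_mem⟩ := hI
  refine ⟨Set.inter_subset_right, ⟨bot_mem, bot_mem_nrSet⟩, ?_, ?_, ?_, ?_⟩
  · exact fun x hx y hy hyx => ⟨mem_of_le x hx.1 y hyx, hy⟩
  · exact fun x hx y hy => ⟨sup_mem x hx.1 y hy.1, sup_mem_nrSet hx.2 hy.2⟩
  · exact fun x hx Γ _ => ⟨cyl_mem x hx.1 Γ, cyl_mem_nrSet Γ hx.2⟩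
  · exact fun x hx τ => ⟨sub_mem x hx.1 _, sub_extMap_mem_nrSet τ hx.2⟩

theorem subset_of_inter_nrSet_subset (hI : IsIdeal β I) (hI' : IsIdeal β I') {J : Set β}
    (h : I ∩ NrSet β A J ⊆ I') : I ⊆ I' := by
  intro x hx
  have cyl_mem_trace : cyl Set.univ x ∈ I ∩ NrSet β A J :=
    ⟨(hI.cyl_mem_iff Set.univ).2 hx, cyl_mem_nrSet_of_compl_subset (Set.subset_univ _) x⟩
  exact (hI'.cyl_mem_iff Set.univ).1 (h cyl_mem_trace)

theorem eq_of_inter_nrSet_eq (hI : IsIdeal β I) (hI' : IsIdeal β I') {J : Set β}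
    (h : I ∩ NrSet β A J = I' ∩ NrSet β A J) : I = I' :=
  (hI.subset_of_inter_nrSet_subset hI' (h.trans_subset Set.inter_subset_left)).antisymm
    (hI'.subset_of_inter_nrSet_subset hI (h.symm.trans_subset Set.inter_subset_left))

end IsIdeal

end Ideals

end PEA

theorem stmt15_general {β : Type u} {B : Type v} [PEA β B] {J : Set β}
    (hsimple : NrSimple B J) : Simple β B := by
  obtain ⟨bot_ne_top, trace_cases⟩ := hsimple
  refine ⟨bot_ne_top, fun I hI => ?_⟩
  refine (trace_cases _ (hI.isNrIdeal_inter_nrSet J)).imp (fun trace_eq => ?_) (fun trace_eq => ?_)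
  · have singleton_trace : ({⊥} : Set B) ∩ NrSet β B J = {⊥} :=
      Set.inter_eq_left.2 (Set.singleton_subset_iff.2 bot_mem_nrSet)
    exact hI.eq_of_inter_nrSet_eq isIdeal_singleton_bot (trace_eq.trans singleton_trace.symm)
  · exact hI.eq_of_inter_nrSet_eq isIdeal_univ (trace_eq.trans (Set.univ_inter _).symm)

/-- Let `α < β` be ordinals (formalized: `J` a proper subset of the
dimension type `β`, playing the role of `α`), `B` a polyadic equality algebra of
dimension `β`, and `A = Nr_α B` its neat `α`-reduct.  If `A` generates `B` and `A`
is simple, then `B` is simple. -/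
theorem stmt15 {β : Type u} {B : Type v} [PEA β B] (J : Set β) (hJ : J ≠ Set.univ)
    (hgen : SgA β (NrSet β B J) = Set.univ)
    (hsimple : NrSimple B J) :
    Simple β B :=
  stmt15_general hsimple
end

section
/- Let α < β be ordinals, B a polyadic equality algebra of dimension β, and A = Nr_α B its neat α-reduct. Then for every ideal I of B, the ideal of B generated by I ∩ A equals I. -/
/- Abstract polyadic equality algebras of dimension `β` (the dimension ordinal is
   formalized as a type `β`), following the Halmos axiomatization described in the
   paper: a Boolean algebra with cylindrifications `c_(Γ)` for `Γ ⊆ β`,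
   substitutions `s_τ` for `τ : β → β`, and diagonal elements `d_ij`. -/

open scoped Classical

universe u v w

open PEA

namespace PEA

variable {β : Type u} {A : Type v} [PEA β A]

theorem cyl_cyl_self (Γ : Set β) (x : A) : cyl Γ (cyl Γ x) = cyl Γ x := by
  rw [cyl_cyl, Set.union_self]

theorem cyl_compl_mem_nrSet (J : Set β) (x : A) : cyl Jᶜ x ∈ NrSet β A J :=
  cyl_cyl_self Jᶜ x

namespace IsIdeal

variable {I : Set A} {x y : A}

theorem bot_mem (hI : IsIdeal β I) : ⊥ ∈ I :=
  hI.1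

theorem mem_of_le (hI : IsIdeal β I) (hx : x ∈ I) (hyx : y ≤ x) : y ∈ I :=
  hI.2.1 x hx y hyx

theorem sup_mem (hI : IsIdeal β I) (hx : x ∈ I) (hy : y ∈ I) : x ⊔ y ∈ I :=
  hI.2.2.1 x hx y hy

theorem cyl_mem (hI : IsIdeal β I) (hx : x ∈ I) (Γ : Set β) : cyl Γ x ∈ I :=
  hI.2.2.2.1 x hx Γ

theorem sub_mem (hI : IsIdeal β I) (hx : x ∈ I) (τ : β → β) : sub τ x ∈ I :=
  hI.2.2.2.2 x hx τ

theorem cyl_compl_mem_inter_nrSet (hI : IsIdeal β I) (hx : x ∈ I) (J : Set β) :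
    cyl Jᶜ x ∈ I ∩ NrSet β A J :=
  ⟨hI.cyl_mem hx Jᶜ, cyl_compl_mem_nrSet J x⟩

theorem sInter {S : Set (Set A)} (hS : ∀ K ∈ S, IsIdeal β K) : IsIdeal β (⋂₀ S) :=
  ⟨fun K hK => (hS K hK).bot_mem,
    fun _ hx _ hyx K hK => (hS K hK).mem_of_le (hx K hK) hyx,
    fun _ hx _ hy K hK => (hS K hK).sup_mem (hx K hK) (hy K hK),
    fun _ hx Γ K hK => (hS K hK).cyl_mem (hx K hK) Γ,
    fun _ hx τ K hK => (hS K hK).sub_mem (hx K hK) τ⟩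

end IsIdeal

theorem isIdeal_idealGen (X : Set A) : IsIdeal β (IdealGen β X) :=
  IsIdeal.sInter fun _ hK => hK.1

theorem subset_idealGen (X : Set A) : X ⊆ IdealGen β X :=
  Set.subset_sInter fun _ hK => hK.2

theorem idealGen_subset {X I : Set A} (hI : IsIdeal β I) (hX : X ⊆ I) : IdealGen β X ⊆ I :=
  Set.sInter_subset_of_mem ⟨hI, hX⟩

end PEA

/-- Let `α < β` be ordinals (formalized: `J` a proper subset of the
dimension type `β`, playing the role of `α`), `B` a polyadic equality algebra of
dimension `β`, and `A = Nr_α B` its neat `α`-reduct.  Then for every ideal `I` of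
`B`, the ideal of `B` generated by `I ∩ A` equals `I`. -/
theorem stmt16 {β : Type u} {B : Type v} [PEA β B] (J : Set β) (hJ : J ≠ Set.univ)
    (I : Set B) (hI : IsIdeal β I) :
    IdealGen β (I ∩ NrSet β B J) = I := by
  refine (idealGen_subset hI Set.inter_subset_left).antisymm fun x hx => ?_
  have hcyl : cyl Jᶜ x ∈ IdealGen β (I ∩ NrSet β B J) :=
    subset_idealGen _ (hI.cyl_compl_mem_inter_nrSet hx J)
  exact (isIdeal_idealGen _).mem_of_le hcyl (le_cyl Jᶜ x)
end

section
/- Let F be a field of characteristic 0 and let α be an infinite ordinal; replace ℚ by F throughout the construction. Then for every natural number n, the subalgebra A_n of C generated by {a_i : i < 2^n} (where a_m = [m·1_F, 1]) cannot be generated by n elements: for every subset X of A_n with |X| ≤ n, the subalgebra of C generated by X is not equal to A_n. -/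
/- The construction of the paper with `ℚ` replaced by an arbitrary field `F` of
   characteristic 0; the infinite ordinal `α` is formalized as an infinite type. -/

open scoped Classical

namespace QPEAF

variable {F : Type*} [Field F] {α : Type*}

/-- The weak space `V = ^αF^(0)`: functions with finite support. -/
def W (α : Type*) (F : Type*) [Field F] : Set (α → F) := {s | {i | s i ≠ 0}.Finite}

/-- Cylindrification `c_i`. -/
def cyl (i : α) (X : Set (α → F)) : Set (α → F) :=
  {s | s ∈ W α F ∧ ∃ t ∈ X, ∀ j, j ≠ i → t j = s j}

/-- Diagonal element `d_ij`. -/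
def diag (i j : α) : Set (α → F) := {s | s ∈ W α F ∧ s i = s j}

/-- Transposition substitution `s_[i,j]`. -/
noncomputable def sub (i j : α) (X : Set (α → F)) : Set (α → F) :=
  {s | s ∈ W α F ∧ (s ∘ Equiv.swap i j) ∈ X}

/-- Membership in the subalgebra of the full quasi-polyadic equality set algebra `C`
    (with unit `V = W α F`) generated by `S`. -/
inductive SgMem (S : Set (Set (α → F))) : Set (α → F) → Prop
  | base {x : Set (α → F)} : x ∈ S → SgMem S x
  | empty : SgMem S ∅
  | top : SgMem S (W α F)
  | dgnl (i j : α) : SgMem S (diag i j)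
  | union {x y : Set (α → F)} : SgMem S x → SgMem S y → SgMem S (x ∪ y)
  | compl {x : Set (α → F)} : SgMem S x → SgMem S (W α F \ x)
  | cylin (i : α) {x : Set (α → F)} : SgMem S x → SgMem S (cyl i x)
  | subst (i j : α) {x : Set (α → F)} : SgMem S x → SgMem S (sub i j x)

/-- The subalgebra `Sg^C S` of `C` generated by `S`. -/
def Sg (S : Set (Set (α → F))) : Set (Set (α → F)) := {x | SgMem S x}

/-- The element `[t, r] = {s ∈ V | t = Σ_i r_i s_i}`. -/
noncomputable def poly (t : F) (r : α → F) : Set (α → F) :=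
  {s | s ∈ W α F ∧ t = ∑ᶠ i, r i * s i}

/-- `a_m = [m·1_F, 1]` where `1` is the constantly-one sequence. -/
noncomputable def aElem (F : Type*) [Field F] {α : Type*} (m : ℕ) : Set (α → F) :=
  poly (m : F) (fun _ => 1)

end QPEAF

open QPEAF

/-!
On the space `V` of finitely supported sequences, consider the filter of generic points of the
whole space and of each hyperplane `[t, 1]`. By quantifier elimination, every element of an algebra
generated by sets `[t, 1]` is constructible, hence generically full or generically null on each of
these flats, and this gives one truth value per flat. Truth values commute with the Boolean
operations, by symmetry of the flats they ignore transpositions, and cylinders and diagonals have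
the same truth value on all flats. So two flats that agree on `X` agree on everything generated by
`X`. With `|X|` generators there are only `2 ^ |X|` patterns of truth values, while `2 ^ n`
hyperplanes and the whole space make `2 ^ n + 1` flats, which the sets `[t, 1]` tell apart.
-/

namespace QPEAF

open Filter

section Generic

variable {F V V' : Type*} [Field F] [AddCommGroup V] [Module F V] [AddCommGroup V'] [Module F V']
  {L : AffineSubspace F V} {L' : AffineSubspace F V'}

/-- The filter of generic subsets of a nonempty affine subspace `L`: those containing all points
of `L` outside the zero loci of finitely many affine functionals that do not vanish on `L`.
For empty `L` it is the junk value `⊤`. -/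
def generic (L : AffineSubspace F V) : Filter V :=
  ⨅ f : {f : V →ᵃ[F] F // ∃ u ∈ L, f u ≠ 0}, 𝓟 {u | u ∈ L ∧ f.1 u ≠ 0}

theorem eventually_generic_mem_and_ne_zero {f : V →ᵃ[F] F} (hf : ∃ u ∈ L, f u ≠ 0) :
    ∀ᶠ u in generic L, u ∈ L ∧ f u ≠ 0 :=
  mem_iInf_of_mem ⟨f, hf⟩ (mem_principal_self _)

theorem eventually_generic_mem (hL : (L : Set V).Nonempty) : ∀ᶠ u in generic L, u ∈ L :=
  (eventually_generic_mem_and_ne_zero (f := AffineMap.const F V 1)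
    (hL.imp fun _ hu => ⟨hu, one_ne_zero⟩)).mono fun _ hu => hu.1

theorem tendsto_generic_of_image_eq (A : V →ᵃ[F] V') (hA : A '' L = L') :
    Tendsto A (generic L) (generic L') := by
  refine tendsto_iInf.2 fun ⟨f, v, hv, hfv⟩ => tendsto_principal.2 ?_
  obtain ⟨u, hu, rfl⟩ := hA.superset hv
  filter_upwards [eventually_generic_mem_and_ne_zero (f := f.comp A) ⟨u, hu, hfv⟩] with w hw
  exact ⟨hA.subset (Set.mem_image_of_mem A hw.1), hw.2⟩

theorem map_add_smul (f : V →ᵃ[F] F) (u e : V) (t : F) :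
    f (u + t • e) = f u + t * f.linear e := by
  simpa [add_comm] using f.map_vadd u (t • e)

theorem exists_forall_add_smul_ne_zero [Infinite F] (T : Finset (V →ᵃ[F] F)) (u e : V) :
    ∃ t : F, ∀ f ∈ T, f u ≠ 0 ∨ f.linear e ≠ 0 → f (u + t • e) ≠ 0 := by
  obtain ⟨t, ht⟩ := Infinite.exists_notMem_finset (T.image fun f => -f u / f.linear e)
  refine ⟨t, fun f hf hne h0 => ?_⟩
  rw [map_add_smul] at h0
  by_cases he : f.linear e = 0
  · simp_all
  · refine ht (Finset.mem_image.2 ⟨f, hf, ?_⟩)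
    rw [div_eq_iff he]
    linear_combination -h0

theorem exists_mem_forall_ne_zero [Infinite F] (hL : (L : Set V).Nonempty)
    (T : Finset (V →ᵃ[F] F)) (hT : ∀ f ∈ T, ∃ u ∈ L, f u ≠ 0) :
    ∃ u ∈ L, ∀ f ∈ T, f u ≠ 0 := by
  induction T using Finset.induction_on with
  | empty => exact hL.imp fun u hu => ⟨hu, by simp⟩
  | insert g T _ ih =>
    obtain ⟨u, huL, hu⟩ := ih fun f hf => hT f (Finset.mem_insert_of_mem hf)
    obtain ⟨w, hwL, hw⟩ := hT g (Finset.mem_insert_self g T)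
    obtain ⟨t, ht⟩ := exists_forall_add_smul_ne_zero (insert g T) u (w - u)
    refine ⟨u + t • (w - u), ?_, fun f hf => ht f hf ?_⟩
    · simpa [AffineMap.lineMap_apply, add_comm] using AffineMap.lineMap_mem t huL hwL
    · obtain rfl | hf := Finset.mem_insert.1 hf
      · by_contra! h
        refine hw ?_
        simpa [h.1, h.2] using map_add_smul f u (w - u) 1
      · exact Or.inl (hu f hf)

theorem generic_neBot [Infinite F] (hL : (L : Set V).Nonempty) : (generic L).NeBot := by
  refine (hasBasis_iInf_principal_finite _).neBot_iff.2 fun {S} hS => ?_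
  obtain ⟨u, huL, hu⟩ := exists_mem_forall_ne_zero hL (hS.toFinset.image Subtype.val) (by
    simp only [Finset.mem_image]
    rintro _ ⟨f, -, rfl⟩
    exact f.2)
  exact ⟨u, Set.mem_iInter₂.2 fun f hf =>
    ⟨huL, hu f (Finset.mem_image_of_mem _ (hS.mem_toFinset.2 hf))⟩⟩

/-- The result of eliminating the direction `e` from `f` by means of `g`: the affine functional that
is constant along `e` and agrees with `f` where `g` vanishes. If `f.linear e = 0`, it is `f`, also
when the quotient is the junk value `0 / 0`. -/
noncomputable def eliminant (f g : V →ᵃ[F] F) (e : V) : V →ᵃ[F] F :=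
  f - (f.linear e / g.linear e) • g

theorem eliminant_of_linear_eq_zero {f : V →ᵃ[F] F} {e : V} (hf : f.linear e = 0)
    (g : V →ᵃ[F] F) : eliminant f g e = f := by
  simp [eliminant, hf]

theorem eliminant_apply (f : V →ᵃ[F] F) {g : V →ᵃ[F] F} {u e : V} {t : F}
    (hg : g.linear e ≠ 0) (h0 : g (u + t • e) = 0) : eliminant f g e u = f (u + t • e) := by
  rw [map_add_smul] at h0 ⊢
  simp only [eliminant, AffineMap.coe_sub, AffineMap.coe_smul, Pi.sub_apply, Pi.smul_apply,
    smul_eq_mul]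
  field_simp
  linear_combination -f.linear e * h0

/-- A set is constructible if membership in it depends only on which of finitely many affine
functionals vanish; these are the quantifier-free definable sets of linear algebra. -/
def IsConstructible (F : Type*) [Field F] {V : Type*} [AddCommGroup V] [Module F V]
    (s : Set V) : Prop :=
  ∃ T : Finset (V →ᵃ[F] F), ∀ u v : V, (∀ f ∈ T, (f u = 0 ↔ f v = 0)) → (u ∈ s ↔ v ∈ s)

theorem isConstructible_setOf_eq_zero (f : V →ᵃ[F] F) : IsConstructible F {u | f u = 0} :=
  ⟨{f}, fun _ _ h => h f (Finset.mem_singleton_self f)⟩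

namespace IsConstructible

variable {s t : Set V}

protected theorem empty : IsConstructible F (∅ : Set V) := ⟨∅, fun _ _ _ => Iff.rfl⟩

protected theorem union (hs : IsConstructible F s) (ht : IsConstructible F t) :
    IsConstructible F (s ∪ t) := by
  obtain ⟨T, hT⟩ := hs
  obtain ⟨T', hT'⟩ := ht
  exact ⟨T ∪ T', fun u v h => or_congr
    (hT u v fun f hf => h f (Finset.mem_union_left _ hf))
    (hT' u v fun f hf => h f (Finset.mem_union_right _ hf))⟩

protected theorem compl (hs : IsConstructible F s) : IsConstructible F sᶜ :=
  hs.imp fun _ hT u v h => not_congr (hT u v h)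

protected theorem preimage {s : Set V'} (hs : IsConstructible F s) (A : V →ᵃ[F] V') :
    IsConstructible F (A ⁻¹' s) := by
  obtain ⟨T, hT⟩ := hs
  exact ⟨T.image fun f => f.comp A, fun u v h =>
    hT _ _ fun f hf => h (f.comp A) (Finset.mem_image_of_mem _ hf)⟩

-- Quantifier elimination: at a zero on the line of some `g ∈ T` with `g.linear e ≠ 0`, the values
-- of `T` are those of eliminants; elsewhere on the line, no `f ∈ T` with `f.linear e ≠ 0` vanishes.
theorem setOf_exists_add_smul_mem [Infinite F] (hs : IsConstructible F s) (e : V) :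
    IsConstructible F {u | ∃ t : F, u + t • e ∈ s} := by
  obtain ⟨T, hT⟩ := hs
  let T' := (T ×ˢ T).image fun p => eliminant p.1 p.2 e
  have eliminant_mem {f g : V →ᵃ[F] F} (hf : f ∈ T) (hg : g ∈ T) : eliminant f g e ∈ T' :=
    Finset.mem_image.2 ⟨(f, g), Finset.mem_product.2 ⟨hf, hg⟩, rfl⟩
  have transfer (u v : V) (huv : ∀ f ∈ T', (f u = 0 ↔ f v = 0)) :
      (∃ t : F, u + t • e ∈ s) → ∃ t : F, v + t • e ∈ s := by
    rintro ⟨t, ht⟩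
    by_cases hg : ∃ g ∈ T, g.linear e ≠ 0 ∧ g (u + t • e) = 0
    · obtain ⟨g, hgT, hge, hgu⟩ := hg
      have hgv : g (v + (-g v / g.linear e) • e) = 0 := by
        rw [map_add_smul, div_mul_cancel₀ _ hge, add_neg_cancel]
      refine ⟨-g v / g.linear e, (hT _ _ fun f hf => ?_).1 ht⟩
      rw [← eliminant_apply f hge hgu, ← eliminant_apply f hge hgv]
      exact huv _ (eliminant_mem hf hgT)
    · push Not at hg
      obtain ⟨r, hr⟩ := exists_forall_add_smul_ne_zero T v e
      refine ⟨r, (hT _ _ fun f hf => ?_).1 ht⟩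
      by_cases hfe : f.linear e = 0
      · simpa [map_add_smul, hfe, eliminant_of_linear_eq_zero] using huv _ (eliminant_mem hf hf)
      · exact iff_of_false (hg f hf hfe) (hr f hf (Or.inr hfe))
  exact ⟨T', fun u v huv => ⟨transfer u v huv, transfer v u fun f hf => (huv f hf).symm⟩⟩

theorem eventually_mem_or_eventually_notMem (hs : IsConstructible F s)
    (hL : (L : Set V).Nonempty) :
    (∀ᶠ u in generic L, u ∈ s) ∨ ∀ᶠ u in generic L, u ∉ s := by
  obtain ⟨T, hT⟩ := hs
  have same_pattern : ∀ᶠ u in generic L, ∀ f ∈ T, (f u = 0 ↔ ∀ w ∈ L, f w = 0) := by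
    refine (eventually_all_finset T).2 fun f _ => ?_
    by_cases hf : ∀ w ∈ L, f w = 0
    · filter_upwards [eventually_generic_mem hL] with u hu
      exact iff_of_true (hf u hu) hf
    · have hne := hf
      push Not at hne
      filter_upwards [eventually_generic_mem_and_ne_zero hne] with u hu
      exact iff_of_false hu.2 hf
  by_cases h : ∃ u ∈ s, ∀ f ∈ T, (f u = 0 ↔ ∀ w ∈ L, f w = 0)
  · obtain ⟨u, hus, hu⟩ := h
    left
    filter_upwards [same_pattern] with v hv
    exact (hT u v fun f hf => (hu f hf).trans (hv f hf).symm).1 hus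
  · right
    filter_upwards [same_pattern] with v hv hvs
    exact h ⟨v, hvs, hv⟩

theorem eventually_notMem_iff [Infinite F] (hs : IsConstructible F s)
    (hL : (L : Set V).Nonempty) :
    (∀ᶠ u in generic L, u ∉ s) ↔ ¬ ∀ᶠ u in generic L, u ∈ s := by
  have := generic_neBot hL
  refine ⟨fun hn h => ?_, (hs.eventually_mem_or_eventually_notMem hL).resolve_left⟩
  obtain ⟨u, hu, hu'⟩ := (hn.and h).exists
  exact hu hu'

theorem eventually_mem_union_iff (hs : IsConstructible F s) (hL : (L : Set V).Nonempty) :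
    (∀ᶠ u in generic L, u ∈ s ∪ t) ↔
      (∀ᶠ u in generic L, u ∈ s) ∨ ∀ᶠ u in generic L, u ∈ t := by
  refine ⟨fun h => ?_, fun h => h.elim (·.mono fun _ => Or.inl) (·.mono fun _ => Or.inr)⟩
  refine (hs.eventually_mem_or_eventually_notMem hL).imp_right fun hn => ?_
  filter_upwards [h, hn] with u hu hus using hu.resolve_left hus

theorem eventually_apply_mem_iff [Infinite F] {s : Set V'} (hs : IsConstructible F s)
    (hL : (L : Set V).Nonempty) (A : V →ᵃ[F] V') (hA : A '' L = L') :
    (∀ᶠ u in generic L, A u ∈ s) ↔ ∀ᶠ v in generic L', v ∈ s := by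
  have hlim := tendsto_generic_of_image_eq A hA
  refine ⟨fun h => ?_, hlim.eventually⟩
  refine (hs.eventually_mem_or_eventually_notMem (hA ▸ hL.image A)).resolve_right fun hn => ?_
  exact ((hs.preimage A).eventually_notMem_iff hL).1 (hlim.eventually hn) h

end IsConstructible

end Generic

section Flat

variable {F V : Type*} [Field F] [AddCommGroup V] [Module F V]
  {φ : V →ₗ[F] F} {e : V} {s : Set V}

/-- The flats of the pencil of a linear form `φ`: the hyperplane `φ = t` for `some t`, and the
whole space for `none`. -/
def flat (φ : V →ₗ[F] F) (k : Option F) : AffineSubspace F V where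
  carrier := {u | ∀ t ∈ k, φ u = t}
  smul_vsub_vadd_mem' c u v w hu hv hw t ht := by simp [hu t ht, hv t ht, hw t ht]

theorem mem_flat {k : Option F} {u : V} : u ∈ flat φ k ↔ ∀ t ∈ k, φ u = t := Iff.rfl

theorem flat_nonempty (he : φ e = 1) (k : Option F) : (flat φ k : Set V).Nonempty := by
  refine ⟨k.getD 0 • e, fun t ht => ?_⟩
  simp [he, Option.mem_def.1 ht]

theorem image_flat_of_comp_eq (A : V ≃ₗ[F] V) (hA : ∀ u, φ (A u) = φ u) (k : Option F) :
    A '' flat φ k = flat φ k := by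
  ext u
  rw [A.image_eq_preimage_symm]
  simp [mem_flat, ← hA (A.symm u)]

theorem exists_affineMap_image_top_eq_flat (he : φ e = 1) (k : Option F) :
    ∃ A : V →ᵃ[F] V, A '' (⊤ : AffineSubspace F V) = flat φ k ∧
      ∀ u, ∃ t : F, A u = u + t • e := by
  cases k with
  | none => exact ⟨AffineMap.id F V, by ext; simp [mem_flat], fun u => ⟨0, by simp⟩⟩
  | some t =>
    let A : V →ᵃ[F] V := AffineMap.id F V + (LinearMap.toSpanSingleton F V e).toAffineMap.comp
      (AffineMap.const F V t - φ.toAffineMap)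
    have A_apply (u : V) : A u = u + (t - φ u) • e := by simp [A, sub_smul]
    refine ⟨A, Set.Subset.antisymm ?_ fun u hu => ⟨u, trivial, ?_⟩, fun u => ⟨_, A_apply u⟩⟩
    · rintro _ ⟨u, -, rfl⟩
      simp [mem_flat, A_apply, he]
    · simp [A_apply, hu t rfl]

-- Each flat is the image of the whole space under a projection along `e`, which preserves `s`.
theorem IsConstructible.eventually_flat_iff [Infinite F] (hs : IsConstructible F s)
    (he : φ e = 1) (hse : ∀ (u : V) (t : F), u + t • e ∈ s ↔ u ∈ s) (k : Option F) :
    (∀ᶠ u in generic (flat φ k), u ∈ s) ↔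
      ∀ᶠ u in generic (⊤ : AffineSubspace F V), u ∈ s := by
  obtain ⟨A, hA, hline⟩ := exists_affineMap_image_top_eq_flat he k
  rw [← hs.eventually_apply_mem_iff ⟨0, AffineSubspace.mem_top F V 0⟩ A hA]
  refine eventually_congr (Eventually.of_forall fun u => ?_)
  obtain ⟨t, ht⟩ := hline u
  rw [ht, hse]

theorem eventually_flat_apply_eq_iff [Infinite F] (he : φ e = 1) (k : Option F) (t : F) :
    (∀ᶠ u in generic (flat φ k), φ u = t) ↔ k = some t := by
  have := generic_neBot (flat_nonempty he k)
  refine ⟨fun h => ?_, ?_⟩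
  · cases k with
    | none =>
      have hne := eventually_generic_mem_and_ne_zero (L := flat φ none)
        (f := φ.toAffineMap - AffineMap.const F V t)
        ⟨(t + 1) • e, by simp [mem_flat], by simp [he]⟩
      obtain ⟨u, hu, -, hu'⟩ := (h.and hne).exists
      simp [hu] at hu'
    | some r =>
      obtain ⟨u, hu, hur⟩ := (h.and (eventually_generic_mem (flat_nonempty he _))).exists
      rw [← hu, hur r rfl]
  · rintro rfl
    filter_upwards [eventually_generic_mem (flat_nonempty he _)] with u hu using hu t rfl

end Flat

section Algebra

variable {F α : Type*} [Field F]

/-- The sum of the coordinates, the linear form whose hyperplanes are the sets `[t, 1]`. -/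
noncomputable def coordSum (F α : Type*) [Field F] : (α →₀ F) →ₗ[F] F :=
  Finsupp.linearCombination F fun _ => 1

@[simp]
theorem coordSum_single (i : α) (a : F) : coordSum F α (Finsupp.single i a) = a := by
  simp [coordSum]

/-- A set of sequences, viewed in the vector space `α →₀ F` that models the unit `W α F`. -/
def finsuppPart (x : Set (α → F)) : Set (α →₀ F) := {u | ⇑u ∈ x}

theorem coe_mem_W (u : α →₀ F) : ⇑u ∈ W α F := u.hasFiniteSupport

theorem finsuppPart_W : finsuppPart (W α F) = Set.univ := Set.eq_univ_of_forall coe_mem_W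

theorem finsuppPart_W_diff (x : Set (α → F)) : finsuppPart (W α F \ x) = (finsuppPart x)ᶜ := by
  ext u
  simp [finsuppPart, coe_mem_W]

theorem finsuppPart_diag (i j : α) :
    finsuppPart (diag i j : Set (α → F)) =
      {u | (Finsupp.lapply i - Finsupp.lapply j : (α →₀ F) →ₗ[F] F).toAffineMap u = 0} := by
  ext u
  simp [finsuppPart, diag, coe_mem_W, sub_eq_zero]

theorem finsuppPart_cyl (i : α) (x : Set (α → F)) :
    finsuppPart (cyl i x) = {u | ∃ t : F, u + t • Finsupp.single i 1 ∈ finsuppPart x} := by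
  ext u
  constructor
  · rintro ⟨-, v, hv, hvu⟩
    have hcoe : ⇑(u + (v i - u i) • Finsupp.single i 1 : α →₀ F) = v := by
      funext j
      obtain rfl | hj := eq_or_ne j i
      · simp
      · simp [hvu j hj, hj.symm]
    exact ⟨v i - u i, by rwa [finsuppPart, Set.mem_ofPred_eq, hcoe]⟩
  · rintro ⟨t, ht⟩
    exact ⟨coe_mem_W u, _, ht, fun j hj => by simp [hj.symm]⟩

theorem add_smul_mem_finsuppPart_cyl_iff (i : α) (x : Set (α → F)) (u : α →₀ F) (t : F) :
    u + t • Finsupp.single i 1 ∈ finsuppPart (cyl i x) ↔ u ∈ finsuppPart (cyl i x) := by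
  simp only [finsuppPart_cyl, Set.mem_ofPred_eq, add_assoc, ← add_smul]
  exact (Equiv.addLeft t).exists_congr_left.trans (by simp)

theorem finsuppPart_sub (i j : α) (x : Set (α → F)) :
    finsuppPart (sub i j x) =
      (Finsupp.domLCongr (R := F) (M := F) (Equiv.swap i j)).toLinearMap.toAffineMap ⁻¹'
        finsuppPart x := by
  ext u
  have hcoe : ⇑(Finsupp.domLCongr (R := F) (M := F) (Equiv.swap i j) u) =
      u ∘ Equiv.swap i j := by
    ext
    simp [Finsupp.equivMapDomain_apply]
  simp only [finsuppPart, sub, coe_mem_W, true_and, Set.mem_ofPred_eq, Set.mem_preimage,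
    LinearMap.coe_toAffineMap, LinearEquiv.coe_coe, hcoe]

theorem coordSum_domLCongr (σ : Equiv.Perm α) (u : α →₀ F) :
    coordSum F α (Finsupp.domLCongr (R := F) (M := F) σ u) = coordSum F α u := by
  simp [coordSum, Finsupp.linearCombination_apply, Finsupp.sum_equivMapDomain]

theorem finsuppPart_poly_one (t : F) :
    finsuppPart (poly t fun _ : α => 1) = {u | coordSum F α u = t} := by
  ext u
  have hsum : ∑ᶠ i, (1 : F) * u i = coordSum F α u := by
    rw [finsum_eq_sum_of_support_subset (s := u.support) _ fun i hi => by simpa using hi]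
    simp [coordSum, Finsupp.linearCombination_apply, Finsupp.sum]
  simp only [finsuppPart, poly, coe_mem_W, hsum, eq_comm, true_and, Set.mem_ofPred_eq]

theorem isConstructible_finsuppPart_poly_one (t : F) :
    IsConstructible F (finsuppPart (poly t fun _ : α => 1)) := by
  convert isConstructible_setOf_eq_zero
    ((coordSum F α).toAffineMap - AffineMap.const F (α →₀ F) t) using 1
  ext u
  simp [finsuppPart_poly_one, sub_eq_zero]

theorem SgMem.isConstructible [Infinite F] {S : Set (Set (α → F))} {x : Set (α → F)}
    (hx : SgMem S x) (hS : ∀ y ∈ S, IsConstructible F (finsuppPart y)) :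
    IsConstructible F (finsuppPart x) := by
  induction hx with
  | base h => exact hS _ h
  | empty => exact .empty
  | top =>
    rw [finsuppPart_W, ← Set.compl_empty]
    exact IsConstructible.empty.compl
  | dgnl i j =>
    rw [finsuppPart_diag]
    exact isConstructible_setOf_eq_zero _
  | union _ _ hx hy => exact hx.union hy
  | compl _ hx =>
    rw [finsuppPart_W_diff]
    exact hx.compl
  | cylin i _ hx =>
    rw [finsuppPart_cyl]
    exact hx.setOf_exists_add_smul_mem _
  | subst i j _ hx =>
    rw [finsuppPart_sub]
    exact hx.preimage _

/-- The sequences of `x` are generic in the flat `k` of the pencil of `coordSum`; on the algebra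
generated by the `[t, 1]` this is a two-valued Boolean homomorphism for each `k`. -/
def IsGenericOn (k : Option F) (x : Set (α → F)) : Prop :=
  ∀ᶠ u in generic (flat (coordSum F α) k), u ∈ finsuppPart x

variable {k l : Option F} {x y : Set (α → F)}

theorem flat_coordSum_nonempty [Nonempty α] (k : Option F) :
    (flat (coordSum F α) k : Set (α →₀ F)).Nonempty :=
  flat_nonempty (coordSum_single (Classical.arbitrary α) 1) k

theorem exists_mem_flat_coordSum_apply_ne [NeZero (2 : F)] {i j : α} (hij : i ≠ j)
    (k : Option F) : ∃ u ∈ flat (coordSum F α) k, u i ≠ u j := by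
  let c := k.getD 0
  have hsum : (c + 1) / 2 + (c - 1) / 2 = c := by
    field_simp
    ring
  have hdiff : (c + 1) / 2 - (c - 1) / 2 = 1 := by
    field_simp
    ring
  refine ⟨Finsupp.single i ((c + 1) / 2) + Finsupp.single j ((c - 1) / 2), fun t ht => ?_, ?_⟩
  · rw [map_add, coordSum_single, coordSum_single, hsum]
    simp [c, Option.mem_def.1 ht]
  · rw [← sub_ne_zero]
    simp [hij, hij.symm, hdiff]

theorem isGenericOn_W : IsGenericOn k (W α F) := Eventually.of_forall coe_mem_W

theorem isGenericOn_union_iff [Nonempty α] (hx : IsConstructible F (finsuppPart x)) :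
    IsGenericOn k (x ∪ y) ↔ IsGenericOn k x ∨ IsGenericOn k y :=
  hx.eventually_mem_union_iff (flat_coordSum_nonempty k)

variable [Infinite F]

theorem not_isGenericOn_empty [Nonempty α] : ¬ IsGenericOn k (∅ : Set (α → F)) := by
  have := generic_neBot (flat_coordSum_nonempty (F := F) (α := α) k)
  exact fun h => h.exists.elim fun _ => id

theorem isGenericOn_W_diff_iff [Nonempty α] (hx : IsConstructible F (finsuppPart x)) :
    IsGenericOn k (W α F \ x) ↔ ¬ IsGenericOn k x := by
  rw [IsGenericOn, finsuppPart_W_diff]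
  exact hx.eventually_notMem_iff (flat_coordSum_nonempty k)

theorem isGenericOn_diag_iff [NeZero (2 : F)] (i j : α) :
    IsGenericOn k (diag i j : Set (α → F)) ↔ i = j := by
  refine ⟨fun h => by_contra fun hij => ?_, ?_⟩
  · have := generic_neBot (flat_nonempty (coordSum_single (F := F) i 1) k)
    have hne := eventually_generic_mem_and_ne_zero (L := flat (coordSum F α) k)
      (f := (Finsupp.lapply i - Finsupp.lapply j : (α →₀ F) →ₗ[F] F).toAffineMap)
      (by simpa [sub_eq_zero] using exists_mem_flat_coordSum_apply_ne hij k)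
    rw [IsGenericOn, finsuppPart_diag] at h
    obtain ⟨u, hu, -, hu'⟩ := (h.and hne).exists
    exact hu' hu
  · rintro rfl
    exact Eventually.of_forall fun u => ⟨coe_mem_W u, rfl⟩

theorem isGenericOn_cyl_iff (i : α) (hx : IsConstructible F (finsuppPart (cyl i x))) :
    IsGenericOn k (cyl i x) ↔
      ∀ᶠ u in generic (⊤ : AffineSubspace F (α →₀ F)), u ∈ finsuppPart (cyl i x) :=
  hx.eventually_flat_iff (coordSum_single i 1) (add_smul_mem_finsuppPart_cyl_iff i x) k

theorem isGenericOn_sub_iff (i j : α) (hx : IsConstructible F (finsuppPart x)) :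
    IsGenericOn k (sub i j x) ↔ IsGenericOn k x := by
  rw [IsGenericOn, finsuppPart_sub]
  exact hx.eventually_apply_mem_iff (flat_nonempty (coordSum_single i 1) k) _
    (image_flat_of_comp_eq _ (coordSum_domLCongr _) k)

theorem isGenericOn_poly_one_iff [Nonempty α] (t : F) :
    IsGenericOn k (poly t fun _ : α => 1) ↔ k = some t := by
  rw [IsGenericOn, finsuppPart_poly_one]
  exact eventually_flat_apply_eq_iff (coordSum_single (Classical.arbitrary α) 1) k t

theorem SgMem.isGenericOn_iff [NeZero (2 : F)] [Nonempty α] {S : Set (Set (α → F))}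
    (hx : SgMem S x) (hS : ∀ y ∈ S, IsConstructible F (finsuppPart y))
    (hkl : ∀ y ∈ S, (IsGenericOn k y ↔ IsGenericOn l y)) :
    IsGenericOn k x ↔ IsGenericOn l x := by
  induction hx with
  | base h => exact hkl _ h
  | empty => exact iff_of_false not_isGenericOn_empty not_isGenericOn_empty
  | top => exact iff_of_true isGenericOn_W isGenericOn_W
  | dgnl i j => rw [isGenericOn_diag_iff, isGenericOn_diag_iff]
  | union hx _ ihx ihy =>
    rw [isGenericOn_union_iff (hx.isConstructible hS),
      isGenericOn_union_iff (hx.isConstructible hS), ihx, ihy]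
  | compl hx ih =>
    rw [isGenericOn_W_diff_iff (hx.isConstructible hS),
      isGenericOn_W_diff_iff (hx.isConstructible hS), ih]
  | cylin i hx =>
    rw [isGenericOn_cyl_iff i ((hx.cylin i).isConstructible hS),
      isGenericOn_cyl_iff i ((hx.cylin i).isConstructible hS)]
  | subst i j hx ih =>
    rw [isGenericOn_sub_iff i j (hx.isConstructible hS),
      isGenericOn_sub_iff i j (hx.isConstructible hS), ih]

end Algebra

theorem exists_ne_forall_mem_iff_of_two_pow_card_lt {ι β : Type*} {K : Finset ι} {X : Finset β}
    (hcard : 2 ^ X.card < K.card) (p : ι → β → Prop) :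
    ∃ k ∈ K, ∃ l ∈ K, k ≠ l ∧ ∀ x ∈ X, (p k x ↔ p l x) := by
  rw [← Finset.card_powerset] at hcard
  obtain ⟨k, hk, l, hl, hkl, heq⟩ := Finset.exists_ne_map_eq_of_card_lt_of_maps_to hcard
    (f := fun k => X.filter (p k)) fun k _ => Finset.mem_powerset.2 (Finset.filter_subset _ X)
  exact ⟨k, hk, l, hl, hkl, Finset.filter_inj'.1 heq⟩

end QPEAF

theorem stmt18_general {F : Type*} [Field F] [Infinite F] [NeZero (2 : F)] {α : Type*}
    [Nonempty α] (T : Finset F) {X : Set (Set (α → F))} (hfin : X.Finite)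
    (hcard : 2 ^ X.ncard ≤ T.card) :
    Sg X ≠ Sg ((fun t => poly t fun _ : α => 1) '' (T : Set F)) := by
  intro heq
  lift X to Finset (Set (α → F)) using hfin
  obtain ⟨k, hk, l, hl, hkl, hX⟩ := exists_ne_forall_mem_iff_of_two_pow_card_lt
    (K := T.insertNone) (X := X) (by simpa [Nat.lt_succ_iff] using hcard) IsGenericOn
  have hXc (x) (hx : x ∈ X) : IsConstructible F (finsuppPart x) := by
    refine SgMem.isConstructible (heq.subset (SgMem.base hx)) ?_
    rintro _ ⟨t, -, rfl⟩
    exact isConstructible_finsuppPart_poly_one t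
  have hiff (t : F) (ht : t ∈ T) : k = some t ↔ l = some t := by
    have hmem : SgMem X (poly t fun _ : α => 1) :=
      heq.superset (SgMem.base (Set.mem_image_of_mem _ ht))
    simpa only [isGenericOn_poly_one_iff] using hmem.isGenericOn_iff hXc hX
  rw [Finset.mem_insertNone] at hk hl
  exact hkl (Option.ext fun t =>
    ⟨fun h => (hiff t (hk t h)).1 h, fun h => (hiff t (hl t h)).2 h⟩)

/-- Let `F` be a field of characteristic 0 and `α` infinite.  With `ℚ`
replaced by `F` throughout the construction, for every natural number `n` the
subalgebra `A_n` of `C` generated by `{a_i : i < 2^n}` (where `a_m = [m·1_F, 1]`)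
cannot be generated by `n` elements: for every subset `X` of `A_n` with `|X| ≤ n`,
the subalgebra of `C` generated by `X` is not `A_n`. -/
theorem stmt18 {F : Type*} [Field F] [CharZero F] {α : Type*} [Infinite α] (n : ℕ)
    (X : Set (Set (α → F)))
    (hX : X ⊆ Sg {x : Set (α → F) | ∃ i : ℕ, i < 2 ^ n ∧ x = aElem F i})
    (hfin : X.Finite) (hcard : X.ncard ≤ n) :
    Sg X ≠ Sg {x : Set (α → F) | ∃ i : ℕ, i < 2 ^ n ∧ x = aElem F i} := by
  convert stmt18_general ((Finset.range (2 ^ n)).image ((↑) : ℕ → F)) hfin ?_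
  · ext; simp [aElem, eq_comm]
  · simpa [Finset.card_image_of_injective _ Nat.cast_injective] using
      Nat.pow_le_pow_right two_pos hcard
end
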